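/- Let t = 2^i·ℓ + 1 where i ≥ 1 and ℓ ≥ 3 is odd, with ℓ dividing 2^i − 1 and ℓ ≠ 2^i − 1. Let f_k ∈ F_2[x,y] be an irreducible factor of g_t(x,y) over F_2 that is not absolutely irreducible. Then deg(f_k)² ≤ Σ_{P ∈ Sing(g_t)} m_P(f_k)², where the sum is over all singular points P of g_t with coordinates in the algebraic closure of F_2. -/

import Mathlib

open MvPolynomial

/-- The multiplicity of a two-variable polynomial `h` at a point `P = (α, β)`:
the least `m` such that the degree-`m` homogeneous component of `h(x+α, y+β)`
is nonzero. -/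
noncomputable def multAt {K : Type*} [CommRing K]
    (h : MvPolynomial (Fin 2) K) (P : K × K) : ℕ :=
  sInf {m : ℕ | homogeneousComponent m (bind₁ ![X 0 + C P.1, X 1 + C P.2] h) ≠ 0}

/-!
A factor `f` of `f_t` that is irreducible over `𝔽₂` but not over `𝔽̄₂` is a product `u * v` over a
finite extension, and the conjugates of `u`, like those of `v`, multiply to a power of `f`.

Bézout's inequality `deg u * deg v ≤ ∑ m_P(u) * m_P(v)`, with only multiplicities on the right,
holds when `u` and `v` meet neither at infinity nor along a common tangent. At infinity, a common
zero of the leading forms would be a zero of `(x + y)^(t-1)` and a multiple zero of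
`x^t + y^t + (x + y)^t`. The points common to `u` and `v` are singular points `P = (α, β)` of `f_t`;
there `α`, `β` and `α + β + 1` are `ℓ`-th roots of unity, and since `ℓ ∣ q - 1` for `q = 2^i`, the
tangent cone of `f_t` is `x^(q+1) / α + y^(q+1) / β + (x+y)^(q+1) / (α+β+1)`, which is squarefree.

Averaging the inequality over the conjugates, where `m_P(u) + m_P(v) = m_P(f)` is fixed,
Chebyshev's sum inequality allows `m_P(u)` and `m_P(v)` to be replaced by their averages. These are
the same fractions of `m_P(f)` as `deg u` and `deg v` are of `deg f`, so they cancel, leaving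
`deg(f)² ≤ ∑ m_P(f)²`.
-/

section HomogeneousExpansion

variable {σ R : Type*}

section CommSemiring

variable [CommSemiring R]

/-- The homogeneous expansion `h(x₁T, x₂T, …) = ∑ₙ hₙ Tⁿ` of a polynomial `h`, whose coefficient
at `Tⁿ` is the homogeneous component `hₙ`. It turns statements about forms of extremal degree into
statements about leading and trailing coefficients of polynomials in one variable. -/
noncomputable def homogeneousExpansion :
    MvPolynomial σ R →ₐ[R] Polynomial (MvPolynomial σ R) :=
  aeval fun i => Polynomial.C (X i) * Polynomial.X

/-- The homogeneous component of top degree. -/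
noncomputable def leadingForm (h : MvPolynomial σ R) : MvPolynomial σ R :=
  (homogeneousExpansion h).leadingCoeff

/-- The least degree of a nonzero homogeneous component, with value `0` at the zero polynomial. -/
noncomputable def minDegree (h : MvPolynomial σ R) : ℕ :=
  (homogeneousExpansion h).natTrailingDegree

/-- The nonzero homogeneous component of least degree. -/
noncomputable def initialForm (h : MvPolynomial σ R) : MvPolynomial σ R :=
  (homogeneousExpansion h).trailingCoeff

lemma homogeneousExpansion_monomial (n : σ →₀ ℕ) (c : R) :
    homogeneousExpansion (monomial n c) = Polynomial.monomial n.degree (monomial n c) := by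
  rw [homogeneousExpansion, aeval_monomial, monomial_eq (s := n)]
  simp only [mul_pow, Finsupp.prod_mul, Finsupp.degree_apply]
  rw [← Polynomial.C_mul_X_pow_eq_monomial, map_mul, mul_assoc, Finsupp.prod, Finsupp.prod,
    Finset.prod_pow_eq_pow_sum, Finsupp.prod, map_prod]
  simp only [map_pow]
  rfl

lemma coeff_homogeneousExpansion (h : MvPolynomial σ R) (d : ℕ) :
    (homogeneousExpansion h).coeff d = homogeneousComponent d h := by
  classical
  induction h using MvPolynomial.induction_on' with
  | monomial n c =>
    rw [homogeneousExpansion_monomial, Polynomial.coeff_monomial]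
    split_ifs with hd
    · rw [homogeneousComponent_eq_self (isHomogeneous_monomial c hd)]
    · rw [homogeneousComponent_of_mem (isHomogeneous_monomial c rfl), if_neg (Ne.symm hd)]
  | add p q hp hq => rw [map_add, Polynomial.coeff_add, hp, hq, map_add]

lemma homogeneousExpansion_injective :
    Function.Injective (homogeneousExpansion : MvPolynomial σ R →ₐ[R] _) := by
  intro a b hab
  ext n
  have hn := congrArg (fun p => coeff n (p.coeff n.degree)) hab
  simpa [coeff_homogeneousExpansion, coeff_homogeneousComponent] using hn

lemma homogeneousExpansion_ne_zero {h : MvPolynomial σ R} (hh : h ≠ 0) :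
    homogeneousExpansion h ≠ 0 :=
  (map_ne_zero_iff _ homogeneousExpansion_injective).2 hh

lemma homogeneousExpansion_of_isHomogeneous {h : MvPolynomial σ R} {n : ℕ}
    (hh : h.IsHomogeneous n) : homogeneousExpansion h = Polynomial.monomial n h := by
  ext1 d
  rw [coeff_homogeneousExpansion, Polynomial.coeff_monomial, homogeneousComponent_of_mem hh]
  simp only [eq_comm]

lemma natDegree_homogeneousExpansion (h : MvPolynomial σ R) :
    (homogeneousExpansion h).natDegree = h.totalDegree := by
  apply le_antisymm
  · rw [Polynomial.natDegree_le_iff_coeff_eq_zero]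
    intro d hd
    rw [coeff_homogeneousExpansion, homogeneousComponent_eq_zero _ _ hd]
  · refine Finset.sup_le fun n hn => Polynomial.le_natDegree_of_ne_zero (n := n.degree) fun h0 => ?_
    have := congrArg (coeff n) h0
    rw [coeff_homogeneousExpansion, coeff_homogeneousComponent, if_pos rfl] at this
    exact mem_support_iff.1 hn this

lemma isHomogeneous_leadingForm (h : MvPolynomial σ R) :
    (leadingForm h).IsHomogeneous h.totalDegree := by
  rw [leadingForm, Polynomial.leadingCoeff, natDegree_homogeneousExpansion,
    coeff_homogeneousExpansion]
  exact homogeneousComponent_isHomogeneous _ _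

lemma leadingForm_ne_zero {h : MvPolynomial σ R} (hh : h ≠ 0) : leadingForm h ≠ 0 :=
  Polynomial.leadingCoeff_ne_zero.2 (homogeneousExpansion_ne_zero hh)

lemma initialForm_ne_zero {h : MvPolynomial σ R} (hh : h ≠ 0) : initialForm h ≠ 0 :=
  Polynomial.trailingCoeff_nonzero_iff_nonzero.2 (homogeneousExpansion_ne_zero hh)

lemma isHomogeneous_initialForm (h : MvPolynomial σ R) :
    (initialForm h).IsHomogeneous (minDegree h) := by
  rw [initialForm, Polynomial.trailingCoeff, coeff_homogeneousExpansion]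
  exact homogeneousComponent_isHomogeneous _ _

lemma leadingForm_of_isHomogeneous {h : MvPolynomial σ R} {n : ℕ} (hh : h.IsHomogeneous n) :
    leadingForm h = h := by
  rw [leadingForm, homogeneousExpansion_of_isHomogeneous hh, Polynomial.leadingCoeff_monomial]

lemma leadingForm_leadingForm (h : MvPolynomial σ R) :
    leadingForm (leadingForm h) = leadingForm h :=
  leadingForm_of_isHomogeneous (isHomogeneous_leadingForm h)

lemma minDegree_of_isHomogeneous {h : MvPolynomial σ R} {n : ℕ} (hh : h.IsHomogeneous n)
    (h0 : h ≠ 0) : minDegree h = n := by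
  rw [minDegree, homogeneousExpansion_of_isHomogeneous hh, Polynomial.natTrailingDegree_monomial h0]

lemma initialForm_of_isHomogeneous {h : MvPolynomial σ R} {n : ℕ} (hh : h.IsHomogeneous n) :
    initialForm h = h := by
  rcases eq_or_ne h 0 with rfl | h0
  · simp [initialForm]
  · rw [initialForm, Polynomial.trailingCoeff, homogeneousExpansion_of_isHomogeneous hh,
      Polynomial.natTrailingDegree_monomial h0, Polynomial.coeff_monomial_same]

lemma totalDegree_leadingForm (h : MvPolynomial σ R) :
    (leadingForm h).totalDegree = h.totalDegree := by
  rcases eq_or_ne h 0 with rfl | h0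
  · simp [leadingForm]
  · exact (isHomogeneous_leadingForm h).totalDegree (leadingForm_ne_zero h0)

lemma mem_pow_idealOfVars_iff_coeff_homogeneousExpansion {h : MvPolynomial σ R} {k : ℕ} :
    h ∈ idealOfVars σ R ^ k ↔ ∀ d < k, (homogeneousExpansion h).coeff d = 0 := by
  simp only [mem_pow_idealOfVars_iff', coeff_homogeneousExpansion, MvPolynomial.ext_iff,
    coeff_homogeneousComponent, coeff_zero]
  aesop

lemma mem_pow_idealOfVars_iff_le_minDegree {h : MvPolynomial σ R} (hh : h ≠ 0) {k : ℕ} :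
    h ∈ idealOfVars σ R ^ k ↔ k ≤ minDegree h := by
  rw [mem_pow_idealOfVars_iff_coeff_homogeneousExpansion, minDegree]
  exact ⟨Polynomial.le_natTrailingDegree (homogeneousExpansion_ne_zero hh),
    fun hk d hd => Polynomial.coeff_eq_zero_of_lt_natTrailingDegree (hd.trans_le hk)⟩

lemma mem_pow_idealOfVars_of_isHomogeneous {h : MvPolynomial σ R} {k : ℕ}
    (hh : h.IsHomogeneous k) : h ∈ idealOfVars σ R ^ k :=
  (mem_pow_idealOfVars_iff' ..).2 fun _ hd => hh.coeff_eq_zero hd.ne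

end CommSemiring

section CommRing

variable [CommRing R]

lemma minDegree_eq_and_initialForm_eq_of_sub_mem {x y : MvPolynomial σ R} {k : ℕ}
    (hxy : x - y ∈ idealOfVars σ R ^ k) (hy : y ≠ 0) (hk : minDegree y < k) :
    minDegree x = minDegree y ∧ initialForm x = initialForm y := by
  have coeff_eq : ∀ d < k, (homogeneousExpansion x).coeff d = (homogeneousExpansion y).coeff d := by
    intro d hd
    rw [← sub_eq_zero, ← Polynomial.coeff_sub, ← map_sub]
    exact mem_pow_idealOfVars_iff_coeff_homogeneousExpansion.1 hxy d hd
  have coeff_ne : (homogeneousExpansion x).coeff (minDegree y) ≠ 0 := by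
    rw [coeff_eq _ hk]
    exact initialForm_ne_zero hy
  have degree_eq : minDegree x = minDegree y := by
    refine (Polynomial.natTrailingDegree_le_of_ne_zero coeff_ne).antisymm
      (Polynomial.le_natTrailingDegree (fun h0 => coeff_ne (by simp [h0])) fun d hd => ?_)
    rw [coeff_eq d (hd.trans hk)]
    exact Polynomial.coeff_eq_zero_of_lt_natTrailingDegree hd
  refine ⟨degree_eq, ?_⟩
  rw [initialForm, Polynomial.trailingCoeff, ← minDegree, degree_eq, coeff_eq _ hk]
  rfl

lemma sub_homogeneousComponent_mem_pow_idealOfVars {h : MvPolynomial σ R} {k : ℕ}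
    (hh : h ∈ idealOfVars σ R ^ k) :
    h - homogeneousComponent k h ∈ idealOfVars σ R ^ (k + 1) := by
  rw [mem_pow_idealOfVars_iff'] at hh ⊢
  intro d hd
  rw [coeff_sub, coeff_homogeneousComponent]
  split_ifs with hdk
  · exact sub_self _
  · rw [hh d (by omega), sub_zero]

lemma sub_initialForm_mem_pow_idealOfVars (h : MvPolynomial σ R) :
    h - initialForm h ∈ idealOfVars σ R ^ (minDegree h + 1) := by
  rw [initialForm, Polynomial.trailingCoeff, coeff_homogeneousExpansion]
  refine sub_homogeneousComponent_mem_pow_idealOfVars ?_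
  rw [mem_pow_idealOfVars_iff_coeff_homogeneousExpansion]
  exact fun d hd => Polynomial.coeff_eq_zero_of_lt_natTrailingDegree hd

end CommRing

section IsDomain

variable [CommRing R] [IsDomain R]

lemma leadingForm_mul (a b : MvPolynomial σ R) :
    leadingForm (a * b) = leadingForm a * leadingForm b := by
  rw [leadingForm, map_mul, Polynomial.leadingCoeff_mul, leadingForm, leadingForm]

lemma initialForm_mul (a b : MvPolynomial σ R) :
    initialForm (a * b) = initialForm a * initialForm b := by
  rw [initialForm, map_mul, Polynomial.trailingCoeff_mul, initialForm, initialForm]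

lemma minDegree_mul {a b : MvPolynomial σ R} (ha : a ≠ 0) (hb : b ≠ 0) :
    minDegree (a * b) = minDegree a + minDegree b := by
  rw [minDegree, map_mul, Polynomial.natTrailingDegree_mul (homogeneousExpansion_ne_zero ha)
    (homogeneousExpansion_ne_zero hb), minDegree, minDegree]

end IsDomain

end HomogeneousExpansion

section OrderAt

variable {σ R : Type*} [CommRing R]

/-- The change of coordinates `h(x) ↦ h(x + P)` moving the point `P` to the origin. -/
noncomputable def recenter (P : σ → R) : MvPolynomial σ R ≃ₐ[R] MvPolynomial σ R :=
  AlgEquiv.ofAlgHom (aeval fun i => X i + C (P i)) (aeval fun i => X i - C (P i))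
    (by ext i : 1; simp) (by ext i : 1; simp)

/-- The multiplicity of `h` at the point `P`, with value `0` for `h = 0`. -/
noncomputable def orderAt (h : MvPolynomial σ R) (P : σ → R) : ℕ :=
  minDegree (recenter P h)

/-- The form defining the tangent cone of `h` at the point `P`. -/
noncomputable def tangentCone (h : MvPolynomial σ R) (P : σ → R) : MvPolynomial σ R :=
  initialForm (recenter P h)

lemma recenter_X (P : σ → R) (i : σ) : recenter P (X i) = X i + C (P i) := by
  simp [recenter]

lemma constantCoeff_recenter (P : σ → R) (h : MvPolynomial σ R) :
    constantCoeff (recenter P h) = eval P h := by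
  induction h using MvPolynomial.induction_on with
  | C a => simp [recenter]
  | add p q hp hq => simp [hp, hq]
  | mul_X p i hp => simp [recenter_X, hp]

lemma pderiv_recenter (P : σ → R) (i : σ) (h : MvPolynomial σ R) :
    pderiv i (recenter P h) = recenter P (pderiv i h) := by
  classical
  induction h using MvPolynomial.induction_on with
  | C a => simp [recenter]
  | add p q hp hq => simp [hp, hq]
  | mul_X p j hp =>
    simp only [map_mul, Derivation.leibniz, hp, recenter_X, map_add, pderiv_X, pderiv_C, add_zero,
      smul_eq_mul]
    by_cases hij : j = i
    · subst hij; simp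
    · simp [hij]

lemma recenter_mem_pow_idealOfVars_iff {h : MvPolynomial σ R} (hh : h ≠ 0) {P : σ → R} {k : ℕ} :
    recenter P h ∈ idealOfVars σ R ^ k ↔ k ≤ orderAt h P :=
  mem_pow_idealOfVars_iff_le_minDegree ((map_ne_zero_iff _ (recenter P).injective).2 hh)

lemma one_le_orderAt_iff {h : MvPolynomial σ R} (hh : h ≠ 0) {P : σ → R} :
    1 ≤ orderAt h P ↔ eval P h = 0 := by
  rw [← recenter_mem_pow_idealOfVars_iff hh, mem_pow_idealOfVars_iff', ← constantCoeff_recenter,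
    constantCoeff_eq]
  simp [Finsupp.degree_eq_zero_iff]

lemma ne_zero_of_orderAt_ne_zero {h : MvPolynomial σ R} {P : σ → R} (hP : orderAt h P ≠ 0) :
    h ≠ 0 := by
  rintro rfl
  simp [orderAt, minDegree] at hP

lemma eval_pderiv_eq_zero_of_two_le_orderAt {h : MvPolynomial σ R} {P : σ → R}
    (hP : 2 ≤ orderAt h P) (i : σ) : eval P (pderiv i h) = 0 := by
  have hh : h ≠ 0 := ne_zero_of_orderAt_ne_zero (P := P) (by omega)
  rw [← constantCoeff_recenter, ← pderiv_recenter, constantCoeff_eq, coeff_pderiv,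
    (mem_pow_idealOfVars_iff' ..).1 ((recenter_mem_pow_idealOfVars_iff hh).2 hP), zero_mul]
  simp

variable [IsDomain R]

lemma orderAt_mul {a b : MvPolynomial σ R} (ha : a ≠ 0) (hb : b ≠ 0) (P : σ → R) :
    orderAt (a * b) P = orderAt a P + orderAt b P := by
  have recenter_ne_zero {c : MvPolynomial σ R} (hc : c ≠ 0) : recenter P c ≠ 0 :=
    (map_ne_zero_iff _ (recenter P).injective).2 hc
  rw [orderAt, map_mul, minDegree_mul (recenter_ne_zero ha) (recenter_ne_zero hb), orderAt,
    orderAt]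

lemma orderAt_le_of_dvd {a b : MvPolynomial σ R} (hab : a ∣ b) (hb : b ≠ 0) (P : σ → R) :
    orderAt a P ≤ orderAt b P := by
  obtain ⟨c, rfl⟩ := hab
  rw [orderAt_mul (left_ne_zero_of_mul hb) (right_ne_zero_of_mul hb)]
  exact Nat.le_add_right _ _

lemma two_le_orderAt_mul {a b : MvPolynomial σ R} (hab : a * b ≠ 0) {P : σ → R}
    (ha : eval P a = 0) (hb : eval P b = 0) : 2 ≤ orderAt (a * b) P := by
  have a_ne_zero := left_ne_zero_of_mul hab
  have b_ne_zero := right_ne_zero_of_mul hab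
  rw [orderAt_mul a_ne_zero b_ne_zero]
  exact add_le_add ((one_le_orderAt_iff a_ne_zero).2 ha) ((one_le_orderAt_iff b_ne_zero).2 hb)

lemma tangentCone_mul (a b : MvPolynomial σ R) (P : σ → R) :
    tangentCone (a * b) P = tangentCone a P * tangentCone b P := by
  rw [tangentCone, map_mul, initialForm_mul, tangentCone, tangentCone]

end OrderAt

-- The substitution inside `multAt` lands in `MvPolynomial ℕ R`, whence the renaming in the proof.
lemma multAt_eq_orderAt {R : Type*} [CommRing R] (h : MvPolynomial (Fin 2) R) (P : R × R) :
    multAt h P = orderAt h ![P.1, P.2] := by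
  have rename_recenter : (bind₁ ![X 0 + C P.1, X 1 + C P.2] h : MvPolynomial ℕ R) =
      rename Fin.val (recenter ![P.1, P.2] h) := by
    have hom_eq : (bind₁ ![X 0 + C P.1, X 1 + C P.2] : _ →ₐ[R] MvPolynomial ℕ R) =
        (rename Fin.val).comp (recenter ![P.1, P.2]).toAlgHom := by
      ext i : 1
      fin_cases i <;> simp [recenter]
    exact DFunLike.congr_fun hom_eq h
  have component_ne_zero_iff (m : ℕ) :
      homogeneousComponent m (bind₁ ![X 0 + C P.1, X 1 + C P.2] h : MvPolynomial ℕ R) ≠ 0 ↔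
        (homogeneousExpansion (recenter ![P.1, P.2] h)).coeff m ≠ 0 := by
    rw [rename_recenter, ← rename_homogeneousComponent, coeff_homogeneousExpansion,
      map_ne_zero_iff _ (rename_injective _ Fin.val_injective)]
  rw [multAt, orderAt, minDegree]
  simp only [component_ne_zero_iff]
  rcases eq_or_ne h 0 with rfl | h0
  · simp
  have expansion_ne_zero : homogeneousExpansion (recenter ![P.1, P.2] h) ≠ 0 :=
    homogeneousExpansion_ne_zero ((map_ne_zero_iff _ (recenter ![P.1, P.2]).injective).2 h0)
  exact IsLeast.csInf_eq ⟨Polynomial.trailingCoeff_nonzero_iff_nonzero.2 expansion_ne_zero,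
    fun m hm => Polynomial.natTrailingDegree_le_of_ne_zero hm⟩

section Dimension

lemma choose_two_add (m n : ℕ) :
    (m + n + 1).choose 2 = (m + 1).choose 2 + (n + 1).choose 2 + m * n := by
  induction n with
  | zero => simp
  | succ n ih =>
    rw [← add_assoc, Nat.choose_succ_succ' _ 1, ih, Nat.choose_succ_succ' (n + 1) 1,
      Nat.choose_one_right, Nat.choose_one_right]
    ring

variable (σ R : Type*) [CommRing R]

/-- The polynomials of total degree less than `k`. -/
noncomputable def degreeLT (k : ℕ) : Submodule R (MvPolynomial σ R) :=
  restrictSupport R {n | n.degree < k}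

variable {σ R}

lemma mem_degreeLT {h : MvPolynomial σ R} {k : ℕ} :
    h ∈ degreeLT σ R k ↔ (homogeneousExpansion h).degree < k := by
  rw [degreeLT, mem_restrictSupport_iff, Polynomial.degree_lt_iff_coeff_zero]
  simp only [coeff_homogeneousExpansion, MvPolynomial.ext_iff, coeff_homogeneousComponent,
    coeff_zero, Set.subset_def, Finset.mem_coe, mem_support_iff, Set.mem_ofPred_eq]
  exact ⟨fun hh d hd n => ite_eq_right_iff.2 fun hn => not_not.1 fun h0 => by
      have := hh n h0
      omega,
    fun hh n hn => lt_of_not_ge fun hk => hn (by simpa using hh _ hk n)⟩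

lemma mem_degreeLT_iff_totalDegree_lt {h : MvPolynomial σ R} (hh : h ≠ 0) {k : ℕ} :
    h ∈ degreeLT σ R k ↔ h.totalDegree < k := by
  rw [mem_degreeLT, ← natDegree_homogeneousExpansion,
    Polynomial.natDegree_lt_iff_degree_lt (homogeneousExpansion_ne_zero hh)]

lemma minDegree_lt_of_mem_degreeLT {h : MvPolynomial σ R} {k : ℕ}
    (h0 : h ≠ 0) (hh : h ∈ degreeLT σ R k) : minDegree h < k :=
  calc minDegree h ≤ (homogeneousExpansion h).natDegree :=
        Polynomial.natTrailingDegree_le_natDegree _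
    _ = h.totalDegree := natDegree_homogeneousExpansion h
    _ < k := (mem_degreeLT_iff_totalDegree_lt h0).1 hh

lemma leadingForm_sub_of_mem_degreeLT {x y : MvPolynomial σ R} {k : ℕ} (hx : x ∈ degreeLT σ R k)
    (hy0 : y ≠ 0) (hy : k ≤ y.totalDegree) : leadingForm (x - y) = -leadingForm y := by
  have degree_lt : (homogeneousExpansion x).degree < (homogeneousExpansion y).degree :=
    calc (homogeneousExpansion x).degree < k := mem_degreeLT.1 hx
      _ ≤ (homogeneousExpansion y).degree := by
        rw [Polynomial.degree_eq_natDegree (homogeneousExpansion_ne_zero hy0),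
          natDegree_homogeneousExpansion]
        exact_mod_cast hy
  rw [leadingForm, map_sub, Polynomial.leadingCoeff_sub_of_degree_lt' degree_lt, leadingForm]

lemma sub_mem_degreeLT_of_leadingForm_eq {x y : MvPolynomial σ R} {k : ℕ}
    (hx : x ∈ degreeLT σ R (k + 1)) (hx0 : x ≠ 0) (hxy : leadingForm x = leadingForm y) :
    x - y ∈ degreeLT σ R k := by
  have hy0 : y ≠ 0 := by
    rintro rfl
    exact leadingForm_ne_zero hx0 (by simpa [leadingForm] using hxy)
  have totalDegree_eq : x.totalDegree = y.totalDegree := by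
    rw [← totalDegree_leadingForm, hxy, totalDegree_leadingForm]
  have degree_lt := Polynomial.degree_sub_lt_left
    (by rw [Polynomial.degree_eq_natDegree (homogeneousExpansion_ne_zero hx0),
      Polynomial.degree_eq_natDegree (homogeneousExpansion_ne_zero hy0),
      natDegree_homogeneousExpansion, natDegree_homogeneousExpansion, totalDegree_eq])
    (homogeneousExpansion_ne_zero hx0) hxy
  rw [mem_degreeLT, map_sub]
  refine degree_lt.trans_le (Polynomial.degree_le_of_natDegree_le ?_)
  rw [natDegree_homogeneousExpansion]
  exact Nat.lt_succ_iff.1 ((mem_degreeLT_iff_totalDegree_lt hx0).1 hx)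

lemma mul_mem_degreeLT_iff [IsDomain R] {a u : MvPolynomial σ R} (hu0 : u ≠ 0) {k : ℕ} :
    a * u ∈ degreeLT σ R (u.totalDegree + k) ↔ a ∈ degreeLT σ R k := by
  rcases eq_or_ne a 0 with rfl | ha0
  · simp
  · rw [mem_degreeLT_iff_totalDegree_lt (mul_ne_zero ha0 hu0), mem_degreeLT_iff_totalDegree_lt ha0,
      totalDegree_mul_of_isDomain ha0 hu0, add_comm, Nat.add_lt_add_iff_left]

lemma finite_setOf_degree_lt (σ : Type*) [Finite σ] (k : ℕ) :
    {n : σ →₀ ℕ | n.degree < k}.Finite :=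
  (Finsupp.finite_of_degree_le k).subset fun _ hn => Nat.le_of_lt hn

instance [Finite σ] (k : ℕ) : Module.Finite R (degreeLT σ R k) :=
  have := (finite_setOf_degree_lt σ k).to_subtype
  Module.Finite.of_basis (basisRestrictSupport R {n | n.degree < k})

lemma degreeLT_sup_pow_idealOfVars (k : ℕ) :
    degreeLT σ R k ⊔ (idealOfVars σ R ^ k).restrictScalars R = ⊤ := by
  refine eq_top_iff.2 fun h _ => ?_
  induction h using MvPolynomial.induction_on' with
  | monomial n c =>
    rcases lt_or_ge n.degree k with hn | hn
    · exact Submodule.mem_sup_left ((monomial_mem_restrictSupport R).2 (Or.inl hn))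
    · refine Submodule.mem_sup_right ((mem_pow_idealOfVars_iff' ..).2 fun d hd => ?_)
      classical
      rw [coeff_monomial, if_neg (by rintro rfl; omega)]
  | add p q hp hq => exact add_mem (hp trivial) (hq trivial)

lemma ncard_setOf_degree_eq (d : ℕ) : {n : Fin 2 →₀ ℕ | n.degree = d}.ncard = d + 1 := by
  have eq_antidiagonal : {n : Fin 2 →₀ ℕ | n.degree = d} =
      (Finset.univ.finsuppAntidiag d : Finset (Fin 2 →₀ ℕ)) := by
    ext n
    simp [Finsupp.degree_eq_sum]
  rw [eq_antidiagonal, Set.ncard_coe_finset, Finset.card_finsuppAntidiag_nat_eq_multichoose,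
    Finset.card_univ, Fintype.card_fin, Nat.multichoose_two]

lemma ncard_setOf_degree_lt (k : ℕ) :
    {n : Fin 2 →₀ ℕ | n.degree < k}.ncard = (k + 1).choose 2 := by
  induction k with
  | zero => simp
  | succ k ih =>
    have split : {n : Fin 2 →₀ ℕ | n.degree < k + 1} =
        {n | n.degree = k} ∪ {n | n.degree < k} := by
      ext n
      simp only [Set.mem_ofPred_eq, Set.mem_union]
      omega
    have disjoint : Disjoint {n : Fin 2 →₀ ℕ | n.degree = k} {n | n.degree < k} :=
      Set.disjoint_left.2 fun _ h_eq h_lt => (lt_irrefl k) (h_eq ▸ h_lt)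
    rw [split, Set.ncard_union_eq disjoint (Finsupp.finite_of_degree_eq k)
      (finite_setOf_degree_lt _ k), ih, ncard_setOf_degree_eq, Nat.choose_succ_succ' (k + 1) 1,
      Nat.choose_one_right]

variable [Nontrivial R]

lemma finrank_degreeLT (k : ℕ) :
    Module.finrank R (degreeLT (Fin 2) R k) = (k + 1).choose 2 := by
  rw [← ncard_setOf_degree_lt, ← Nat.card_coe_set_eq]
  exact Module.finrank_eq_nat_card_basis (basisRestrictSupport R {n : Fin 2 →₀ ℕ | n.degree < k})

lemma finrank_homogeneousSubmodule (d : ℕ) :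
    Module.finrank R (homogeneousSubmodule (Fin 2) R d) = d + 1 := by
  rw [← ncard_setOf_degree_eq, ← Nat.card_coe_set_eq, homogeneousSubmodule_eq_finsupp_supported]
  exact Module.finrank_eq_nat_card_basis (basisRestrictSupport R {n : Fin 2 →₀ ℕ | n.degree = d})

end Dimension

section LinearCombination

variable {R A : Type*} [CommRing R] [CommRing A] [Algebra R A]

/-- The linear map `(a, b) ↦ a * u + b * v` with `a` restricted to `M` and `b` to `N`. -/
noncomputable def combinationMap (M N : Submodule R A) (u v : A) : M × N →ₗ[R] A :=
  (LinearMap.mulRight R u ∘ₗ M.subtype).coprod (LinearMap.mulRight R v ∘ₗ N.subtype)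

end LinearCombination

section LocalIntersection

variable {K : Type*} [Field K]

-- An injection between spaces of the same dimension `m + n + 2` is surjective.
lemma exists_isHomogeneous_combination_eq {U V h : MvPolynomial (Fin 2) K} {m n : ℕ}
    (hU : U.IsHomogeneous (m + 1)) (hV : V.IsHomogeneous (n + 1)) (hV0 : V ≠ 0)
    (hUV : IsRelPrime U V) (hh : h.IsHomogeneous (m + n + 1)) :
    ∃ a b, a.IsHomogeneous n ∧ b.IsHomogeneous m ∧ a * U + b * V = h := by
  let Φ := combinationMap (homogeneousSubmodule (Fin 2) K n) (homogeneousSubmodule (Fin 2) K m) U V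
  have injective : Function.Injective Φ := by
    rw [injective_iff_map_eq_zero]
    rintro ⟨⟨a, ha⟩, b, hb⟩ hab
    replace hab : a * U + b * V = 0 := hab
    have V_dvd_a : V ∣ a := hUV.symm.dvd_of_dvd_mul_right
      ⟨-b, by linear_combination hab⟩
    have a_eq_zero : a = 0 := by
      by_contra ha0
      have := totalDegree_le_of_dvd_of_isDomain V_dvd_a ha0
      rw [hV.totalDegree hV0, IsHomogeneous.totalDegree ha ha0] at this
      omega
    have b_eq_zero : b = 0 := by simpa [a_eq_zero, hV0] using hab
    simp [a_eq_zero, b_eq_zero]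
  have range_le : LinearMap.range Φ ≤ homogeneousSubmodule (Fin 2) K (m + n + 1) := by
    rintro _ ⟨⟨⟨a, ha⟩, b, hb⟩, rfl⟩
    refine add_mem ?_ ?_
    · exact (by ring : n + (m + 1) = m + n + 1) ▸ IsHomogeneous.mul ha hU
    · exact (by ring : m + (n + 1) = m + n + 1) ▸ IsHomogeneous.mul hb hV
  have range_eq : LinearMap.range Φ = homogeneousSubmodule (Fin 2) K (m + n + 1) := by
    have finite (d : ℕ) : Module.Finite K (homogeneousSubmodule (Fin 2) K d) :=
      Module.Finite.of_fg (homogeneousSubmodule_fg ..)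
    refine Submodule.eq_of_le_of_finrank_eq range_le ?_
    rw [LinearMap.finrank_range_of_inj injective, Module.finrank_prod]
    simp only [finrank_homogeneousSubmodule]
    omega
  obtain ⟨⟨⟨a, ha⟩, b, hb⟩, hab⟩ : h ∈ LinearMap.range Φ := range_eq ▸ hh
  exact ⟨a, b, ha, hb, hab⟩

variable {u v : MvPolynomial (Fin 2) K}

lemma pow_idealOfVars_le_span_sup {m n : ℕ} (hu : minDegree u = m + 1) (hv : minDegree v = n + 1)
    (hv0 : v ≠ 0) (huv : IsRelPrime (initialForm u) (initialForm v)) :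
    idealOfVars (Fin 2) K ^ (m + n + 1) ≤
      Ideal.span {u, v} ⊔ idealOfVars (Fin 2) K ^ (m + n + 2) := by
  intro h hh
  obtain ⟨a, b, ha, hb, hab⟩ := exists_isHomogeneous_combination_eq
    (hu ▸ isHomogeneous_initialForm u) (hv ▸ isHomogeneous_initialForm v) (initialForm_ne_zero hv0)
    huv (homogeneousComponent_isHomogeneous (m + n + 1) h)
  have au_mem : a * (u - initialForm u) ∈ idealOfVars (Fin 2) K ^ (m + n + 2) := by
    have := Ideal.mul_mem_mul (mem_pow_idealOfVars_of_isHomogeneous ha)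
      (sub_initialForm_mem_pow_idealOfVars u)
    rwa [← pow_add, hu, show n + (m + 1 + 1) = m + n + 2 by ring] at this
  have bv_mem : b * (v - initialForm v) ∈ idealOfVars (Fin 2) K ^ (m + n + 2) := by
    have := Ideal.mul_mem_mul (mem_pow_idealOfVars_of_isHomogeneous hb)
      (sub_initialForm_mem_pow_idealOfVars v)
    rwa [← pow_add, hv, show m + (n + 1 + 1) = m + n + 2 by ring] at this
  refine Submodule.mem_sup.2 ⟨a * u + b * v, Ideal.mem_span_pair.2 ⟨a, b, rfl⟩,
    (h - homogeneousComponent (m + n + 1) h) -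
      (a * (u - initialForm u) + b * (v - initialForm v)),
    sub_mem (sub_homogeneousComponent_mem_pow_idealOfVars hh) (add_mem au_mem bv_mem), ?_⟩
  linear_combination hab

lemma exists_mul_mem_span_of_mem_pow (hu : 1 ≤ minDegree u) (hv : 1 ≤ minDegree v)
    (huv : IsRelPrime (initialForm u) (initialForm v)) :
    ∃ r, constantCoeff r = 1 ∧
      ∀ h ∈ idealOfVars (Fin 2) K ^ (minDegree u + minDegree v), r * h ∈ Ideal.span {u, v} := by
  have hv0 : v ≠ 0 := by
    rintro rfl
    simp [minDegree] at hv
  obtain ⟨m, hm⟩ := Nat.exists_eq_add_of_le' hu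
  obtain ⟨n, hn⟩ := Nat.exists_eq_add_of_le' hv
  obtain ⟨r, hr, hrle⟩ := Submodule.exists_sub_one_mem_and_smul_le_of_fg_of_le_sup
    (I := idealOfVars (Fin 2) K) (N := Ideal.span {u, v})
    (N' := idealOfVars (Fin 2) K ^ (m + n + 1)) ((idealOfVars_fg _ _).pow) le_rfl (by
      rw [smul_eq_mul, ← pow_succ']
      exact pow_idealOfVars_le_span_sup hm hn hv0 huv)
  refine ⟨r, ?_, fun h hh => hrle (Submodule.smul_mem_pointwise_smul h r _ ?_)⟩
  · rw [← pow_one (idealOfVars _ _), mem_pow_idealOfVars_iff'] at hr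
    have := hr 0 (by simp)
    rwa [← constantCoeff_eq, map_sub, map_one, sub_eq_zero] at this
  · exact Ideal.pow_le_pow_right (by omega) hh

lemma eq_zero_of_combination_mem_pow {a b : MvPolynomial (Fin 2) K} (hu0 : u ≠ 0) (hv0 : v ≠ 0)
    (huv : IsRelPrime (initialForm u) (initialForm v))
    (ha : a ∈ degreeLT (Fin 2) K (minDegree v)) (hb : b ∈ degreeLT (Fin 2) K (minDegree u))
    (hab : a * u + b * v ∈ idealOfVars (Fin 2) K ^ (minDegree u + minDegree v)) :
    a = 0 ∧ b = 0 := by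
  have a_eq_zero : a = 0 := by
    by_contra ha0
    have lt := minDegree_lt_of_mem_degreeLT ha0 ha
    have initialForm_eq : initialForm (-b * v) = initialForm (a * u) := by
      refine (minDegree_eq_and_initialForm_eq_of_sub_mem (k := minDegree u + minDegree v) ?_
        (mul_ne_zero ha0 hu0) ?_).2
      · convert neg_mem hab using 1
        ring
      · rw [minDegree_mul ha0 hu0]
        omega
    rw [initialForm_mul, initialForm_mul] at initialForm_eq
    have dvd : initialForm v ∣ initialForm a :=
      huv.symm.dvd_of_dvd_mul_right ⟨_, initialForm_eq.symm.trans (mul_comm _ _)⟩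
    have le := totalDegree_le_of_dvd_of_isDomain dvd (initialForm_ne_zero ha0)
    rw [(isHomogeneous_initialForm v).totalDegree (initialForm_ne_zero hv0),
      (isHomogeneous_initialForm a).totalDegree (initialForm_ne_zero ha0)] at le
    omega
  refine ⟨a_eq_zero, ?_⟩
  by_contra hb0
  have lt := minDegree_lt_of_mem_degreeLT hb0 hb
  rw [a_eq_zero, zero_mul, zero_add, mem_pow_idealOfVars_iff_le_minDegree (mul_ne_zero hb0 hv0),
    minDegree_mul hb0 hv0] at hab
  omega

lemma finrank_quotient_pow_idealOfVars_le (k : ℕ) :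
    Module.Finite K (MvPolynomial (Fin 2) K ⧸ (idealOfVars (Fin 2) K ^ k).restrictScalars K) ∧
    Module.finrank K (MvPolynomial (Fin 2) K ⧸ (idealOfVars (Fin 2) K ^ k).restrictScalars K) ≤
      (k + 1).choose 2 := by
  let π := ((idealOfVars (Fin 2) K ^ k).restrictScalars K).mkQ ∘ₗ (degreeLT (Fin 2) K k).subtype
  have surjective : Function.Surjective π := by
    rw [← LinearMap.range_eq_top, LinearMap.range_comp, Submodule.range_subtype,
      Submodule.map_mkQ_eq_top, sup_comm]
    exact degreeLT_sup_pow_idealOfVars k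
  exact ⟨Module.Finite.of_surjective π surjective,
    finrank_degreeLT (R := K) k ▸ LinearMap.finrank_le_finrank_of_surjective surjective⟩

-- Count dimensions: modulo `𝔪 ^ (m + n)`, the combinations of `u` and `v` with coefficients of
-- degrees less than `n` and `m` already span a space of codimension at most `m * n`.
lemma finrank_le_minDegree_mul_minDegree {M : Type*} [AddCommGroup M] [Module K M]
    (hu0 : u ≠ 0) (hv0 : v ≠ 0) (huv : IsRelPrime (initialForm u) (initialForm v))
    {π : MvPolynomial (Fin 2) K →ₗ[K] M} (hπ : Function.Surjective π)
    (hπ_pow : ∀ h ∈ idealOfVars (Fin 2) K ^ (minDegree u + minDegree v), π h = 0)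
    (hπ_span : ∀ h ∈ Ideal.span {u, v}, π h = 0) :
    Module.Finite K M ∧ Module.finrank K M ≤ minDegree u * minDegree v := by
  let J := (idealOfVars (Fin 2) K ^ (minDegree u + minDegree v)).restrictScalars K
  obtain ⟨finite_quotient, finrank_quotient⟩ : Module.Finite K (_ ⧸ J) ∧
      Module.finrank K (_ ⧸ J) ≤ (minDegree u + minDegree v + 1).choose 2 :=
    finrank_quotient_pow_idealOfVars_le _
  let π' : (MvPolynomial (Fin 2) K ⧸ J) →ₗ[K] M := J.liftQ π hπ_pow
  have surjective : Function.Surjective π' := fun y =>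
    let ⟨x, hx⟩ := hπ y
    ⟨J.mkQ x, hx⟩
  let Φ := J.mkQ ∘ₗ combinationMap (degreeLT (Fin 2) K (minDegree v))
    (degreeLT (Fin 2) K (minDegree u)) u v
  have injective : Function.Injective Φ := by
    rw [injective_iff_map_eq_zero]
    rintro ⟨⟨a, ha⟩, b, hb⟩ hab
    obtain ⟨rfl, rfl⟩ := eq_zero_of_combination_mem_pow hu0 hv0 huv ha hb
      ((Submodule.Quotient.mk_eq_zero J).1 hab)
    rfl
  have range_le_ker : LinearMap.range Φ ≤ LinearMap.ker π' := by
    rintro _ ⟨⟨a, b⟩, rfl⟩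
    exact hπ_span _ (Ideal.mem_span_pair.2 ⟨a, b, rfl⟩)
  have finrank_range : Module.finrank K (LinearMap.range Φ) =
      (minDegree v + 1).choose 2 + (minDegree u + 1).choose 2 := by
    rw [LinearMap.finrank_range_of_inj injective, Module.finrank_prod, finrank_degreeLT,
      finrank_degreeLT]
  refine ⟨Module.Finite.of_surjective π' surjective, ?_⟩
  have finrank_ker := Submodule.finrank_mono range_le_ker
  have rank_nullity := π'.finrank_range_add_finrank_ker
  rw [LinearMap.range_eq_top.2 surjective, finrank_top] at rank_nullity
  have := choose_two_add (minDegree u) (minDegree v)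
  omega

/-- The contraction to the polynomial ring of the extension of `I` to the local ring at `P`: the
polynomials that lie in `I` after multiplication by some `r` with `r(P) ≠ 0`. For
`I = (u, v)` its codimension is the intersection multiplicity of `u` and `v` at `P`. -/
def localContraction {σ : Type*} (I : Ideal (MvPolynomial σ K)) (P : σ → K) :
    Ideal (MvPolynomial σ K) where
  carrier := {h | ∃ r, eval P r ≠ 0 ∧ r * h ∈ I}
  zero_mem' := ⟨1, by simp⟩
  add_mem' := by
    rintro a b ⟨r, hr, hra⟩ ⟨s, hs, hsb⟩
    refine ⟨r * s, by simp [hr, hs], ?_⟩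
    convert add_mem (I.mul_mem_left s hra) (I.mul_mem_left r hsb) using 1
    ring
  smul_mem' := by
    rintro c a ⟨r, hr, hra⟩
    refine ⟨r, hr, ?_⟩
    convert I.mul_mem_left c hra using 1
    rw [smul_eq_mul]
    ring

lemma le_localContraction {σ : Type*} (I : Ideal (MvPolynomial σ K)) (P : σ → K) :
    I ≤ localContraction I P := fun h hh => ⟨1, by simpa using hh⟩

lemma finrank_quotient_localContraction_le (hu0 : u ≠ 0) (hv0 : v ≠ 0) {P : Fin 2 → K}
    (hu : eval P u = 0) (hv : eval P v = 0)
    (huv : IsRelPrime (tangentCone u P) (tangentCone v P)) :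
    Module.Finite K (MvPolynomial (Fin 2) K ⧸ localContraction (Ideal.span {u, v}) P) ∧
    Module.finrank K (MvPolynomial (Fin 2) K ⧸ localContraction (Ideal.span {u, v}) P) ≤
      orderAt u P * orderAt v P := by
  let π := (Ideal.Quotient.mkₐ K (localContraction (Ideal.span {u, v}) P)).toLinearMap ∘ₗ
    (recenter P).symm.toLinearMap
  have recenter_ne_zero {h : MvPolynomial (Fin 2) K} (hh : h ≠ 0) : recenter P h ≠ 0 :=
    (map_ne_zero_iff _ (recenter P).injective).2 hh
  have symm_mem_span : ∀ h ∈ Ideal.span {recenter P u, recenter P v},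
      (recenter P).symm h ∈ Ideal.span {u, v} := by
    intro h hh
    have := Ideal.mem_map_of_mem (recenter P).symm hh
    simpa [Ideal.map_span, Set.image_pair] using this
  refine finrank_le_minDegree_mul_minDegree (π := π) (recenter_ne_zero hu0) (recenter_ne_zero hv0)
    huv ?_ (fun h hh => ?_) fun h hh => ?_
  · exact Ideal.Quotient.mk_surjective.comp (recenter P).symm.surjective
  · obtain ⟨r, hr, hr_mem⟩ := exists_mul_mem_span_of_mem_pow ((one_le_orderAt_iff hu0).2 hu)
      ((one_le_orderAt_iff hv0).2 hv) huv
    refine Ideal.Quotient.eq_zero_iff_mem.2 ⟨(recenter P).symm r, ?_, ?_⟩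
    · simp [← constantCoeff_recenter, hr]
    · simpa using symm_mem_span _ (hr_mem h hh)
  · exact Ideal.Quotient.eq_zero_iff_mem.2 (le_localContraction _ _ (symm_mem_span h hh))

end LocalIntersection

section Bezout

variable {K : Type*} [Field K]

lemma mem_of_forall_mem_localContraction {σ : Type*} [Finite σ] [IsAlgClosed K]
    {I : Ideal (MvPolynomial σ K)} {h : MvPolynomial σ K}
    (hh : ∀ P : σ → K, (∀ f ∈ I, eval P f = 0) → h ∈ localContraction I P) : h ∈ I := by
  by_contra h_notMem
  have conductor_ne_top : I.colon {h} ≠ ⊤ := by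
    rw [Ideal.ne_top_iff_one, Submodule.mem_colon_singleton, one_smul]
    exact h_notMem
  obtain ⟨M, hM, le_M⟩ := Ideal.exists_le_maximal _ conductor_ne_top
  obtain ⟨P, rfl⟩ := (isMaximal_iff_eq_vanishingIdeal_singleton (K := K)).1 hM
  have eval_eq_zero {r : MvPolynomial σ K} (hr : r * h ∈ I) : eval P r = 0 := by
    simpa [mem_vanishingIdeal_iff, aeval_eq_eval] using le_M (Submodule.mem_colon_singleton.2 hr)
  obtain ⟨r, hr, hrh⟩ := hh P fun f hf => eval_eq_zero (I.mul_mem_right h hf)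
  exact hr (eval_eq_zero hrh)

variable {u v : MvPolynomial (Fin 2) K}

-- Leading terms of `a` of degree `≥ v.totalDegree` are removed one at a time by subtracting
-- multiples of the relation `v * u - u * v = 0`.
lemma exists_combination_of_totalDegree_lt {a b : MvPolynomial (Fin 2) K} (hu0 : u ≠ 0)
    (huv : IsRelPrime (leadingForm u) (leadingForm v))
    (hab : a * u + b * v ∈ degreeLT (Fin 2) K (u.totalDegree + v.totalDegree)) :
    ∃ a' ∈ degreeLT (Fin 2) K v.totalDegree, ∃ b', a' * u + b' * v = a * u + b * v := by
  obtain ⟨k, hk⟩ : ∃ k, a ∈ degreeLT (Fin 2) K (v.totalDegree + k) := by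
    refine ⟨a.totalDegree + 1, mem_degreeLT.2 ?_⟩
    exact (Polynomial.degree_le_natDegree.trans_eq
      (congrArg _ (natDegree_homogeneousExpansion a))).trans_lt (by norm_cast; omega)
  induction k generalizing a b with
  | zero => exact ⟨a, hk, b, rfl⟩
  | succ k ih =>
    by_cases ha : a ∈ degreeLT (Fin 2) K (v.totalDegree + k)
    · exact ih hab ha
    have ha0 : a ≠ 0 := fun h0 => ha (h0 ▸ zero_mem _)
    have leadingForm_eq : leadingForm (b * v) = -leadingForm (a * u) := by
      rw [← leadingForm_sub_of_mem_degreeLT hab (mul_ne_zero ha0 hu0), add_sub_cancel_left]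
      rw [mem_degreeLT_iff_totalDegree_lt ha0] at ha
      rw [totalDegree_mul_of_isDomain ha0 hu0]
      omega
    rw [leadingForm_mul, leadingForm_mul] at leadingForm_eq
    obtain ⟨c, hc⟩ : leadingForm v ∣ leadingForm a :=
      huv.symm.dvd_of_dvd_mul_right ⟨-leadingForm b, by linear_combination leadingForm_eq⟩
    have leadingForm_vc : leadingForm a = leadingForm (v * c) := by
      rw [← leadingForm_leadingForm a, hc, leadingForm_mul, leadingForm_leadingForm,
        leadingForm_mul]
    have relation : (a - v * c) * u + (b + u * c) * v = a * u + b * v := by ring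
    rw [← relation] at hab ⊢
    exact ih hab (sub_mem_degreeLT_of_leadingForm_eq hk ha0 leadingForm_vc)

lemma finrank_le_of_combination_mem_degreeLT (hu0 : u ≠ 0) (hv0 : v ≠ 0)
    (huv : IsRelPrime (leadingForm u) (leadingForm v))
    {W : Submodule K (degreeLT (Fin 2) K (u.totalDegree + v.totalDegree))}
    (hW : ∀ h ∈ W, (h : MvPolynomial (Fin 2) K) ∈ Ideal.span {u, v}) :
    Module.finrank K W ≤ (v.totalDegree + 1).choose 2 + (u.totalDegree + 1).choose 2 := by
  let Φ := combinationMap (degreeLT (Fin 2) K v.totalDegree) (degreeLT (Fin 2) K u.totalDegree) u v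
  have le_range : W.map (Submodule.subtype _) ≤ LinearMap.range Φ := by
    rintro _ ⟨⟨h, hh⟩, hhW, rfl⟩
    obtain ⟨a, b, rfl⟩ := Ideal.mem_span_pair.1 (hW _ hhW)
    obtain ⟨a', ha', b', hab⟩ := exists_combination_of_totalDegree_lt hu0 huv hh
    have b'v_mem : b' * v ∈ degreeLT (Fin 2) K (v.totalDegree + u.totalDegree) := by
      rw [add_comm, ← add_sub_cancel_left (a' * u) (b' * v), hab]
      exact sub_mem hh ((mul_mem_degreeLT_iff hu0).2 ha')
    exact ⟨⟨⟨a', ha'⟩, b', (mul_mem_degreeLT_iff hv0).1 b'v_mem⟩, hab⟩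
  calc Module.finrank K W = Module.finrank K (W.map (Submodule.subtype _)) :=
        (Submodule.finrank_map_subtype_eq _ W).symm
    _ ≤ Module.finrank K (LinearMap.range Φ) := Submodule.finrank_mono le_range
    _ ≤ _ := LinearMap.finrank_range_le Φ
    _ = _ := by rw [Module.finrank_prod, finrank_degreeLT, finrank_degreeLT]

theorem totalDegree_mul_totalDegree_le_sum_orderAt [IsAlgClosed K] (hu0 : u ≠ 0) (hv0 : v ≠ 0)
    (huv : IsRelPrime (leadingForm u) (leadingForm v)) (S : Finset (Fin 2 → K))
    (hS : ∀ P, eval P u = 0 → eval P v = 0 →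
      P ∈ S ∧ IsRelPrime (tangentCone u P) (tangentCone v P)) :
    u.totalDegree * v.totalDegree ≤ ∑ P ∈ S, orderAt u P * orderAt v P := by
  classical
  let I := Ideal.span {u, v}
  let Z := {P ∈ S | eval P u = 0 ∧ eval P v = 0}
  have local_bound (P : Z) : Module.Finite K (_ ⧸ localContraction I P.1) ∧
      Module.finrank K (_ ⧸ localContraction I P.1) ≤ orderAt u P.1 * orderAt v P.1 := by
    obtain ⟨-, hu, hv⟩ := Finset.mem_filter.1 P.2
    exact finrank_quotient_localContraction_le hu0 hv0 hu hv (hS P hu hv).2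
  have finite (P : Z) := (local_bound P).1
  let Θ : degreeLT (Fin 2) K (u.totalDegree + v.totalDegree) →ₗ[K]
      ∀ P : Z, MvPolynomial (Fin 2) K ⧸ localContraction I P.1 :=
    LinearMap.pi fun P =>
      (Ideal.Quotient.mkₐ K (localContraction I P.1)).toLinearMap ∘ₗ Submodule.subtype _
  have ker_le_span : ∀ h ∈ LinearMap.ker Θ, (h : MvPolynomial (Fin 2) K) ∈ I := by
    intro h hh
    refine mem_of_forall_mem_localContraction fun P hP => ?_
    have hPu : eval P u = 0 := hP u (Ideal.subset_span (by simp))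
    have hPv : eval P v = 0 := hP v (Ideal.subset_span (by simp))
    have hPZ : P ∈ Z := Finset.mem_filter.2 ⟨(hS P hPu hPv).1, hPu, hPv⟩
    exact Ideal.Quotient.eq_zero_iff_mem.1 (congrFun (LinearMap.mem_ker.1 hh) ⟨P, hPZ⟩)
  have finrank_ker := finrank_le_of_combination_mem_degreeLT hu0 hv0 huv ker_le_span
  have rank_nullity := Θ.finrank_range_add_finrank_ker
  rw [finrank_degreeLT, choose_two_add] at rank_nullity
  calc u.totalDegree * v.totalDegree ≤ Module.finrank K (LinearMap.range Θ) := by omega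
    _ ≤ Module.finrank K (∀ P : Z, MvPolynomial (Fin 2) K ⧸ localContraction I P.1) :=
      Submodule.finrank_le _
    _ = ∑ P : Z, Module.finrank K (_ ⧸ localContraction I P.1) := Module.finrank_pi_fintype K
    _ ≤ ∑ P : Z, orderAt u P.1 * orderAt v P.1 := Finset.sum_le_sum fun P _ => (local_bound P).2
    _ = ∑ P ∈ Z, orderAt u P * orderAt v P :=
      Finset.sum_coe_sort Z fun P => orderAt u P * orderAt v P
    _ ≤ ∑ P ∈ S, orderAt u P * orderAt v P :=
      Finset.sum_le_sum_of_subset (Finset.filter_subset _ _)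

end Bezout

section AdditiveDegree

variable {M : Type*} [CommMonoidWithZero M] [Nontrivial M] {δ : M → ℕ}

lemma map_eq_of_associated_of_map_mul (δ_mul : ∀ {a b}, a ≠ 0 → b ≠ 0 → δ (a * b) = δ a + δ b)
    {a b : M} (ha : a ≠ 0) (hab : Associated a b) : δ a = δ b := by
  obtain ⟨c, rfl⟩ := hab
  have map_one : δ 1 = 0 := by simpa using δ_mul (one_ne_zero (α := M)) one_ne_zero
  have map_unit := δ_mul c.ne_zero c⁻¹.ne_zero
  rw [Units.mul_inv, map_one] at map_unit
  rw [δ_mul ha c.ne_zero]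
  omega

variable [NoZeroDivisors M]

lemma map_prod_eq_sum_of_map_mul (δ_mul : ∀ {a b}, a ≠ 0 → b ≠ 0 → δ (a * b) = δ a + δ b)
    {ι : Type*} (s : Finset ι) {a : ι → M} (ha : ∀ i, a i ≠ 0) :
    δ (∏ i ∈ s, a i) = ∑ i ∈ s, δ (a i) := by
  induction s using Finset.cons_induction with
  | empty => simpa using δ_mul (one_ne_zero (α := M)) one_ne_zero
  | cons i s hi ih =>
    rw [Finset.prod_cons, Finset.sum_cons, δ_mul (ha i) (Finset.prod_ne_zero_iff.2 fun j _ => ha j),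
      ih]

lemma sum_eq_mul_of_associated_prod_pow
    (δ_mul : ∀ {a b}, a ≠ 0 → b ≠ 0 → δ (a * b) = δ a + δ b) {ι : Type*} {s : Finset ι}
    {a : ι → M} (ha : ∀ i, a i ≠ 0) {c : M} (hc : c ≠ 0) {n : ℕ}
    (h : Associated (∏ i ∈ s, a i) (c ^ n)) : ∑ i ∈ s, δ (a i) = n * δ c := by
  rw [← Fin.prod_const] at h
  rw [← map_prod_eq_sum_of_map_mul δ_mul s ha, map_eq_of_associated_of_map_mul δ_mul
    (Finset.prod_ne_zero_iff.2 fun i _ => ha i) h,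
    map_prod_eq_sum_of_map_mul δ_mul _ fun _ => hc, Fin.sum_const, smul_eq_mul]

end AdditiveDegree

section Averaging

variable {ι κ : Type*} [Fintype ι]

lemma card_mul_sum_mul_le_of_add_eq {a b : ι → ℕ} {m : ℕ} (hab : ∀ i, a i + b i = m) :
    Fintype.card ι * ∑ i, a i * b i ≤ (∑ i, a i) * ∑ i, b i := by
  refine Antivary.card_mul_sum_le_sum_mul_sum fun i j hij => ?_
  have := hab i
  have := hab j
  omega

lemma sq_le_sum_sq_of_forall_mul_le_sum {S : Finset κ} {a b : ι → κ → ℕ} {m : κ → ℕ}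
    {d d₁ d₂ s₁ s₂ : ℕ} (hs : 0 < s₁ * s₂) (hd₁ : Fintype.card ι * d₁ = s₁ * d)
    (hd₂ : Fintype.card ι * d₂ = s₂ * d) (hab : ∀ i P, a i P + b i P = m P)
    (ha : ∀ P, ∑ i, a i P = s₁ * m P) (hb : ∀ P, ∑ i, b i P = s₂ * m P)
    (hle : ∀ i, d₁ * d₂ ≤ ∑ P ∈ S, a i P * b i P) : d ^ 2 ≤ ∑ P ∈ S, m P ^ 2 := by
  refine le_of_mul_le_mul_left ?_ hs
  calc s₁ * s₂ * d ^ 2 = (s₁ * d) * (s₂ * d) := by ring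
    _ = Fintype.card ι * ∑ _i : ι, d₁ * d₂ := by
      rw [← hd₁, ← hd₂, Finset.sum_const, Finset.card_univ, smul_eq_mul]
      ring
    _ ≤ Fintype.card ι * ∑ i, ∑ P ∈ S, a i P * b i P := by
      gcongr with i
      exact hle i
    _ = ∑ P ∈ S, Fintype.card ι * ∑ i, a i P * b i P := by
      rw [Finset.sum_comm, Finset.mul_sum]
    _ ≤ ∑ P ∈ S, (∑ i, a i P) * ∑ i, b i P :=
      Finset.sum_le_sum fun P _ => card_mul_sum_mul_le_of_add_eq fun i => hab i P
    _ = s₁ * s₂ * ∑ P ∈ S, m P ^ 2 := by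
      rw [Finset.mul_sum]
      refine Finset.sum_congr rfl fun P _ => ?_
      rw [ha, hb]
      ring

end Averaging

section Conjugates

variable {σ k K : Type*} [Field k] [Field K] [Algebra k K]

lemma totalDegree_map_of_field {R S : Type*} [Field R] [Field S] (φ : R →+* S)
    (p : MvPolynomial σ R) : (map φ p).totalDegree = p.totalDegree := by
  rw [totalDegree, totalDegree, support_map_of_injective _ φ.injective]

lemma map_ne_zero_of_field {R S : Type*} [Field R] [Field S] (φ : R →+* S) {p : MvPolynomial σ R}
    (hp : p ≠ 0) : map φ p ≠ 0 :=
  (map_ne_zero_iff _ (map_injective _ φ.injective)).2 hp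

lemma totalDegree_pos_of_not_isUnit {p : MvPolynomial σ K} (hp : p ≠ 0) (hpu : ¬IsUnit p) :
    0 < p.totalDegree := by
  refine Nat.pos_of_ne_zero fun h0 => hpu ?_
  rw [totalDegree_eq_zero_iff_eq_C] at h0
  rw [h0, ne_eq, C_eq_zero] at hp
  rw [h0]
  exact (IsUnit.mk0 _ hp).map C

lemma exists_finiteDimensional_mem_range_map [Algebra.IsAlgebraic k K] (u v : MvPolynomial σ K) :
    ∃ E : IntermediateField k K, FiniteDimensional k E ∧
      u ∈ Set.range (map (algebraMap E K)) ∧ v ∈ Set.range (map (algebraMap E K)) := by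
  classical
  let s : Set K := ↑(u.coeffs ∪ v.coeffs)
  have coeffs_subset : s ⊆ Set.range (algebraMap (IntermediateField.adjoin k s) K) :=
    fun x hx => ⟨⟨x, IntermediateField.subset_adjoin _ _ hx⟩, rfl⟩
  refine ⟨IntermediateField.adjoin k s, IntermediateField.finiteDimensional_adjoin fun x _ =>
    Algebra.IsIntegral.isIntegral x, ?_, ?_⟩ <;> rw [mem_range_map_iff_coeffs_subset]
  · exact .trans (by exact_mod_cast Finset.subset_union_left) coeffs_subset
  · exact .trans (by exact_mod_cast Finset.subset_union_right) coeffs_subset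

lemma mem_range_map_algebraMap_of_forall_map_eq [IsGalois k K] {p : MvPolynomial σ K}
    (hp : ∀ τ : K ≃ₐ[k] K, map (τ : K →+* K) p = p) : p ∈ Set.range (map (algebraMap k K)) := by
  rw [mem_range_map_iff_coeffs_subset]
  intro c hc
  obtain ⟨m, -, rfl⟩ := mem_coeffs_iff.1 hc
  refine (InfiniteGalois.mem_range_algebraMap_iff_fixed _).2 fun τ => ?_
  conv_rhs => rw [← hp τ, coeff_map]
  rfl

variable {E : Type*} [Field E] [Algebra k E]

lemma map_algHom_map_algebraMap (φ : E →ₐ[k] K) (f : MvPolynomial σ k) :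
    map (φ : E →+* K) (map (algebraMap k E) f) = map (algebraMap k K) f := by
  rw [map_map, φ.comp_algebraMap]

variable [FiniteDimensional k E]

lemma prod_map_algHom_mem_range [IsGalois k K] (u : MvPolynomial σ E) :
    ∏ φ : E →ₐ[k] K, map (φ : E →+* K) u ∈ Set.range (map (σ := σ) (algebraMap k K)) := by
  refine mem_range_map_algebraMap_of_forall_map_eq fun τ => ?_
  rw [map_prod]
  refine Fintype.prod_equiv (AlgEquiv.refl.arrowCongr τ) _ _ fun φ => ?_
  rw [map_map]
  rfl

lemma exists_associated_prod_map_algHom_pow [IsGalois k K] {f : MvPolynomial σ k}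
    (hf : Irreducible f) {u : MvPolynomial σ E} (hu : u ∣ map (algebraMap k E) f) :
    ∃ s, Associated (∏ φ : E →ₐ[k] K, map (φ : E →+* K) u) (map (algebraMap k K) f ^ s) := by
  obtain ⟨v, huv⟩ := hu
  obtain ⟨p, hp⟩ := prod_map_algHom_mem_range (k := k) (K := K) u
  obtain ⟨q, hq⟩ := prod_map_algHom_mem_range (k := k) (K := K) v
  have mul_eq : f ^ Fintype.card (E →ₐ[k] K) = p * q := by
    refine map_injective (algebraMap k K) (algebraMap k K).injective ?_
    rw [map_pow, map_mul, hp, hq, ← Finset.prod_mul_distrib]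
    simp only [← map_mul, ← huv, map_algHom_map_algebraMap, Finset.prod_const, Finset.card_univ]
  obtain ⟨s, -, hs⟩ := (dvd_prime_pow hf.prime _).1 ⟨q, mul_eq⟩
  refine ⟨s, ?_⟩
  rw [← hp, ← map_pow]
  exact hs.map _

lemma exists_card_mul_totalDegree_eq_and_sum_orderAt_eq [IsGalois k K] {f : MvPolynomial σ k}
    (hf : Irreducible f) {u : MvPolynomial σ E} (hu : u ∣ map (algebraMap k E) f) :
    ∃ s, Fintype.card (E →ₐ[k] K) * u.totalDegree = s * f.totalDegree ∧
      ∀ P, ∑ φ : E →ₐ[k] K, orderAt (map (φ : E →+* K) u) P =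
        s * orderAt (map (algebraMap k K) f) P := by
  have hu0 : u ≠ 0 := ne_zero_of_dvd_ne_zero (map_ne_zero_of_field _ hf.ne_zero) hu
  obtain ⟨s, hs⟩ := exists_associated_prod_map_algHom_pow (K := K) hf hu
  refine ⟨s, ?_, fun P => ?_⟩
  · simpa [totalDegree_map_of_field] using sum_eq_mul_of_associated_prod_pow
      totalDegree_mul_of_isDomain (fun φ => map_ne_zero_of_field _ hu0)
      (map_ne_zero_of_field _ hf.ne_zero) hs
  · exact sum_eq_mul_of_associated_prod_pow (δ := (orderAt · P)) (fun ha hb => orderAt_mul ha hb P)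
      (fun φ => map_ne_zero_of_field _ hu0) (map_ne_zero_of_field _ hf.ne_zero) hs

lemma exists_mul_eq_map_algebraMap_of_not_irreducible [Algebra.IsAlgebraic k K]
    {f : MvPolynomial σ k} (hf : Irreducible f) (hfK : ¬Irreducible (map (algebraMap k K) f)) :
    ∃ E : IntermediateField k K, FiniteDimensional k E ∧ ∃ u v : MvPolynomial σ E,
      u * v = map (algebraMap k E) f ∧ 0 < u.totalDegree ∧ 0 < v.totalDegree := by
  have hfK_unit : ¬IsUnit (map (algebraMap k K) f) := fun h => by
    have f_pos := totalDegree_pos_of_not_isUnit hf.ne_zero hf.not_isUnit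
    rw [isUnit_iff_totalDegree_of_isReduced, totalDegree_map_of_field] at h
    omega
  obtain ⟨uK, vK, huvK, hu, hv⟩ :
      ∃ u v, u * v = map (algebraMap k K) f ∧ ¬IsUnit u ∧ ¬IsUnit v := by
    simpa [irreducible_iff, hfK_unit, eq_comm] using hfK
  obtain ⟨E, hE, ⟨u, rfl⟩, v, rfl⟩ := exists_finiteDimensional_mem_range_map (k := k) uK vK
  have mul_ne_zero := huvK.trans_ne (map_ne_zero_of_field _ hf.ne_zero)
  have u_pos := totalDegree_pos_of_not_isUnit (left_ne_zero_of_mul mul_ne_zero) hu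
  have v_pos := totalDegree_pos_of_not_isUnit (right_ne_zero_of_mul mul_ne_zero) hv
  rw [totalDegree_map_of_field] at u_pos v_pos
  refine ⟨E, hE, u, v, ?_, u_pos, v_pos⟩
  refine map_injective (algebraMap E K) (algebraMap E K).injective ?_
  rw [map_mul, huvK, map_map, ← IsScalarTower.algebraMap_eq]

theorem totalDegree_sq_le_sum_orderAt_sq [IsGalois k K] [IsAlgClosed K]
    {f : MvPolynomial (Fin 2) k} (hf : Irreducible f)
    (hfK : ¬Irreducible (map (algebraMap k K) f)) (S : Finset (Fin 2 → K))
    (hlead : ∀ u v, u * v = map (algebraMap k K) f → IsRelPrime (leadingForm u) (leadingForm v))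
    (hS : ∀ u v, u * v = map (algebraMap k K) f → ∀ P, eval P u = 0 → eval P v = 0 →
      P ∈ S ∧ IsRelPrime (tangentCone u P) (tangentCone v P)) :
    f.totalDegree ^ 2 ≤ ∑ P ∈ S, orderAt (map (algebraMap k K) f) P ^ 2 := by
  obtain ⟨E, _, u, v, huv, u_pos, v_pos⟩ := exists_mul_eq_map_algebraMap_of_not_irreducible hf hfK
  have conjugate_mul (φ : E →ₐ[k] K) :
      map (φ : E →+* K) u * map (φ : E →+* K) v = map (algebraMap k K) f := by
    rw [← map_mul, huv, map_algHom_map_algebraMap]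
  have conjugate_ne_zero (φ : E →ₐ[k] K) :=
    mul_ne_zero_iff.1 ((conjugate_mul φ).trans_ne (map_ne_zero_of_field _ hf.ne_zero))
  obtain ⟨s₁, hd₁, ha⟩ := exists_card_mul_totalDegree_eq_and_sum_orderAt_eq (K := K) hf
    (huv ▸ dvd_mul_right u v)
  obtain ⟨s₂, hd₂, hb⟩ := exists_card_mul_totalDegree_eq_and_sum_orderAt_eq (K := K) hf
    (huv ▸ dvd_mul_left v u)
  have card_pos : 0 < Fintype.card (E →ₐ[k] K) := Fintype.card_pos_iff.2 ⟨E.val⟩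
  have s_pos : 0 < s₁ * s₂ :=
    Nat.mul_pos (Nat.pos_of_mul_pos_right (hd₁ ▸ Nat.mul_pos card_pos u_pos))
      (Nat.pos_of_mul_pos_right (hd₂ ▸ Nat.mul_pos card_pos v_pos))
  refine sq_le_sum_sq_of_forall_mul_le_sum s_pos hd₁ hd₂ (fun φ P => ?_) ha hb fun φ => ?_
  · rw [← orderAt_mul (conjugate_ne_zero φ).1 (conjugate_ne_zero φ).2, conjugate_mul]
  · simpa only [totalDegree_map_of_field] using totalDegree_mul_totalDegree_le_sum_orderAt
      (conjugate_ne_zero φ).1 (conjugate_ne_zero φ).2 (hlead _ _ (conjugate_mul φ)) S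
      (hS _ _ (conjugate_mul φ))

end Conjugates

section Squares

lemma dvd_derivation_of_mul_self_dvd {R A : Type*} [CommSemiring R] [CommSemiring A] [Algebra R A]
    (δ : Derivation R A A) {a b : A} (h : a * a ∣ b) : a ∣ δ b := by
  obtain ⟨c, rfl⟩ := h
  simp only [Derivation.leibniz, smul_eq_mul]
  exact ⟨a * δ c + c * (δ a + δ a), by ring⟩

lemma dvd_homogeneousComponent_mul_of_dvd_leadingForm {σ R : Type*} [CommSemiring R]
    {a u v : MvPolynomial σ R} (hu : a ∣ leadingForm u) (hv : a ∣ leadingForm v) {n : ℕ}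
    (hn : n + 1 = u.totalDegree + v.totalDegree) : a ∣ homogeneousComponent n (u * v) := by
  rw [← coeff_homogeneousExpansion, map_mul, Polynomial.coeff_mul]
  rw [← natDegree_homogeneousExpansion, ← natDegree_homogeneousExpansion] at hn
  refine Finset.dvd_sum fun ⟨i, j⟩ hij => ?_
  rw [Finset.HasAntidiagonal.mem_antidiagonal] at hij
  dsimp only at hij ⊢
  rcases lt_trichotomy i (homogeneousExpansion u).natDegree with hi | rfl | hi
  · refine Dvd.dvd.mul_left ?_ _
    rcases eq_or_lt_of_le (show (homogeneousExpansion v).natDegree ≤ j by omega) with rfl | hj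
    · exact hv
    · rw [Polynomial.coeff_eq_zero_of_natDegree_lt hj]
      exact dvd_zero a
  · exact Dvd.dvd.mul_right hu _
  · rw [Polynomial.coeff_eq_zero_of_natDegree_lt hi, zero_mul]
    exact dvd_zero a

lemma isRelPrime_X_zero_X_one {R : Type*} [CommRing R] [IsDomain R] :
    IsRelPrime (X 0 : MvPolynomial (Fin 2) R) (X 1) := by
  rw [X_prime.irreducible.isRelPrime_iff_not_dvd, X_dvd_X]
  decide

-- The partial derivatives are the combinations of `x ^ q` and `y ^ q`, `q = p ^ i`, with matrix
-- `[a + c, c; c, b + c]`, whose determinant is `a * b + a * c + b * c`.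
lemma squarefree_add_add_pow_char_pow_add_one {K : Type*} [Field K] (p : ℕ) [Fact p.Prime]
    [CharP K p] {i : ℕ} (hi : i ≠ 0) {a b c : K} (habc : a * b + a * c + b * c ≠ 0) :
    Squarefree (C a * X 0 ^ (p ^ i + 1) + C b * X 1 ^ (p ^ i + 1) +
      C c * (X 0 + X 1) ^ (p ^ i + 1) : MvPolynomial (Fin 2) K) := by
  intro D hD
  have cast_eq_one : ((p ^ i + 1 : ℕ) : MvPolynomial (Fin 2) K) = 1 := by
    rw [Nat.cast_succ, Nat.cast_pow, CharP.cast_eq_zero, zero_pow hi, zero_add]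
  have dvd_pderiv_zero := dvd_derivation_of_mul_self_dvd (pderiv 0) hD
  have dvd_pderiv_one := dvd_derivation_of_mul_self_dvd (pderiv 1) hD
  simp only [map_add, pderiv_C_mul, pderiv_pow, cast_eq_one, one_mul,
    Nat.add_sub_cancel, pderiv_X_self, pderiv_X_of_ne (show (0 : Fin 2) ≠ 1 by decide),
    pderiv_X_of_ne (show (1 : Fin 2) ≠ 0 by decide), add_pow_char_pow, mul_one, mul_zero,
    add_zero, zero_add] at dvd_pderiv_zero dvd_pderiv_one
  have unit_det : IsUnit (C (a * b + a * c + b * c) : MvPolynomial (Fin 2) K) :=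
    (IsUnit.mk0 _ habc).map C
  have dvd_X_zero : D ∣ X 0 ^ p ^ i := by
    refine unit_det.dvd_mul_left.1 ?_
    have := dvd_sub (dvd_pderiv_zero.mul_left (C b + C c)) (dvd_pderiv_one.mul_left (C c))
    simp only [map_add, map_mul]
    convert this using 1
    ring
  have dvd_X_one : D ∣ X 1 ^ p ^ i := by
    refine unit_det.dvd_mul_left.1 ?_
    have := dvd_sub (dvd_pderiv_one.mul_left (C a + C c)) (dvd_pderiv_zero.mul_left (C c))
    simp only [map_add, map_mul]
    convert this using 1
    ring
  exact isRelPrime_X_zero_X_one.pow dvd_X_zero dvd_X_one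

end Squares

lemma pow_char_pow_dvd_add_pow_sub {R : Type*} [CommRing R] (p : ℕ) [Fact p.Prime] [CharP R p]
    {i l : ℕ} (hl : l ≠ 0) (a : R) {c : R} (hcl : c ^ l = 1) (hcp : c ^ p ^ i = c) :
    a ^ (2 * p ^ i) ∣ (a + c) ^ (p ^ i * l + 1) -
      (c + a + l * (a ^ p ^ i + c ^ (l - 1) * a ^ (p ^ i + 1))) := by
  obtain ⟨r, hr⟩ := sq_dvd_add_pow_sub_sub (a ^ p ^ i) c l
  have pow_mul_self : c ^ (l - 1) * c = 1 := by rw [pow_sub_one_mul hl, hcl]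
  refine ⟨r * (a + c), ?_⟩
  rw [pow_succ, pow_mul, add_pow_char_pow, hcp, add_comm (a ^ p ^ i)]
  rw [hcl] at hr
  linear_combination (a + c) * hr + l * a ^ p ^ i * pow_mul_self

section ApnPolynomial

/-- The polynomial `f_t = x^t + y^t + 1 + (x + y + 1)^t`. In characteristic two its zeros outside
the lines `x = 1`, `y = 1`, `x = y` decide whether the power map `x ↦ x^t` is almost perfect
nonlinear (APN). -/
noncomputable def apnPolynomial (R : Type*) [CommSemiring R] (t : ℕ) : MvPolynomial (Fin 2) R :=
  X 0 ^ t + X 1 ^ t + 1 + (X 0 + X 1 + 1) ^ t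

lemma map_apnPolynomial {R S : Type*} [CommSemiring R] [CommSemiring S] (φ : R →+* S) (t : ℕ) :
    map φ (apnPolynomial R t) = apnPolynomial S t := by
  simp [apnPolynomial]

lemma homogeneousComponent_apnPolynomial {R : Type*} [CommSemiring R] {t n : ℕ} (hn : n ≠ 0) :
    homogeneousComponent n (apnPolynomial R t) =
      (if n = t then X 0 ^ t + X 1 ^ t else 0) +
        (t.choose n : MvPolynomial (Fin 2) R) * (X 0 + X 1) ^ n := by
  have expansion : homogeneousExpansion (apnPolynomial R t) =
      Polynomial.C (X 0 ^ t + X 1 ^ t) * Polynomial.X ^ t + 1 +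
        ((Polynomial.X + 1) ^ t).comp (Polynomial.C (X 0 + X 1) * Polynomial.X) := by
    simp only [apnPolynomial, homogeneousExpansion, map_add, map_pow, map_one, aeval_X, mul_pow,
      add_mul, Polynomial.pow_comp, Polynomial.add_comp, Polynomial.X_comp, Polynomial.one_comp]
  rw [← coeff_homogeneousExpansion, expansion]
  simp only [Polynomial.coeff_add, Polynomial.coeff_C_mul_X_pow, Polynomial.coeff_one, if_neg hn,
    add_zero, Polynomial.comp_C_mul_X_coeff, Polynomial.coeff_X_add_one_pow]

lemma homogeneousComponent_self_apnPolynomial {R : Type*} [CommSemiring R] {t : ℕ} (ht : t ≠ 0) :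
    homogeneousComponent t (apnPolynomial R t) = X 0 ^ t + X 1 ^ t + (X 0 + X 1) ^ t := by
  rw [homogeneousComponent_apnPolynomial ht, if_pos rfl, Nat.choose_self, Nat.cast_one, one_mul]

variable {R : Type*} [CommRing R] [CharP R 2] {t : ℕ}

lemma pderiv_zero_pow_add_pow_add_add_pow (ht : Odd t) :
    pderiv 0 (X 0 ^ t + X 1 ^ t + (X 0 + X 1) ^ t : MvPolynomial (Fin 2) R) =
      X 0 ^ (t - 1) + (X 0 + X 1) ^ (t - 1) := by
  simp [pderiv_X, CharTwo.natCast_eq_ite, Nat.not_even_iff_odd.2 ht]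

lemma pow_add_pow_add_add_pow_ne_zero (ht : Odd t) (ht1 : t ≠ 1) :
    (X 0 ^ t + X 1 ^ t + (X 0 + X 1) ^ t : MvPolynomial (Fin 2) R) ≠ 0 := by
  have _ : Nontrivial R := CharP.nontrivial_of_char_ne_one (v := 2) (by decide)
  intro h
  have pderiv_eq_zero := congrArg (pderiv 0) h
  rw [pderiv_zero_pow_add_pow_add_add_pow ht, map_zero] at pderiv_eq_zero
  have : t - 1 ≠ 0 := by have := ht.pos; omega
  simpa [CharTwo.add_self_eq_zero, zero_pow this] using congrArg (eval 1) pderiv_eq_zero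

lemma totalDegree_apnPolynomial (ht : Odd t) (ht1 : t ≠ 1) :
    (apnPolynomial R t).totalDegree = t := by
  rw [← natDegree_homogeneousExpansion]
  refine Polynomial.natDegree_eq_of_le_of_coeff_ne_zero ?_ ?_
  · refine Polynomial.natDegree_le_iff_coeff_eq_zero.2 fun n hn => ?_
    rw [coeff_homogeneousExpansion, homogeneousComponent_apnPolynomial (by omega), if_neg hn.ne',
      Nat.choose_eq_zero_of_lt hn, Nat.cast_zero, zero_mul, add_zero]
  · rw [coeff_homogeneousExpansion, homogeneousComponent_self_apnPolynomial ht.pos.ne']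
    exact pow_add_pow_add_add_pow_ne_zero ht ht1

lemma apnPolynomial_ne_zero (ht : Odd t) (ht1 : t ≠ 1) : apnPolynomial R t ≠ 0 := fun h =>
  ht.pos.ne (by rw [← totalDegree_apnPolynomial (R := R) ht ht1, h, totalDegree_zero])

lemma pow_sub_one_eq_one_of_two_le_orderAt_apnPolynomial (ht : Odd t) {P : Fin 2 → R}
    (hP : 2 ≤ orderAt (apnPolynomial R t) P) :
    P 0 ^ (t - 1) = 1 ∧ P 1 ^ (t - 1) = 1 ∧ (P 0 + P 1 + 1) ^ (t - 1) = 1 := by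
  have eval_eq_zero : P 0 ^ t + P 1 ^ t + 1 + (P 0 + P 1 + 1) ^ t = 0 := by
    have := (one_le_orderAt_iff (ne_zero_of_orderAt_ne_zero (two_pos.trans_le hP).ne')).1
      (one_le_two.trans hP)
    simpa only [apnPolynomial, map_add, map_pow, map_one, eval_X] using this
  have P_zero_pow : P 0 ^ (t - 1) = (P 0 + P 1 + 1) ^ (t - 1) := by
    simpa [apnPolynomial, pderiv_X, CharTwo.natCast_eq_ite, Nat.not_even_iff_odd.2 ht,
      CharTwo.add_eq_zero] using eval_pderiv_eq_zero_of_two_le_orderAt hP 0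
  have P_one_pow : P 1 ^ (t - 1) = (P 0 + P 1 + 1) ^ (t - 1) := by
    simpa [apnPolynomial, pderiv_X, CharTwo.natCast_eq_ite, Nat.not_even_iff_odd.2 ht,
      CharTwo.add_eq_zero] using eval_pderiv_eq_zero_of_two_le_orderAt hP 1
  rw [P_zero_pow, P_one_pow, and_self, and_self]
  rw [← pow_sub_one_mul ht.pos.ne' (P 0), ← pow_sub_one_mul ht.pos.ne' (P 1),
    ← pow_sub_one_mul ht.pos.ne' (P 0 + P 1 + 1), P_zero_pow, P_one_pow] at eval_eq_zero
  linear_combination eval_eq_zero -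
    ((P 0 + P 1 + 1) ^ (t - 1) * (P 0 + P 1) + 1) * CharTwo.two_eq_zero (R := R)

lemma finite_setOf_two_le_orderAt_apnPolynomial [IsDomain R] (ht : Odd t) (ht1 : t ≠ 1) :
    {P : Fin 2 → R | 2 ≤ orderAt (apnPolynomial R t) P}.Finite := by
  have t_sub_one_pos : 0 < t - 1 := by have := ht.pos; omega
  have roots_finite : {a : R | a ^ (t - 1) = 1}.Finite := by
    classical
    refine (Polynomial.nthRoots (t - 1) (1 : R)).toFinset.finite_toSet.subset fun a ha => ?_
    simpa [Polynomial.mem_nthRoots t_sub_one_pos] using ha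
  refine (Set.Finite.pi fun _ : Fin 2 => roots_finite).subset fun P hP j _ => ?_
  have := pow_sub_one_eq_one_of_two_le_orderAt_apnPolynomial ht hP
  fin_cases j
  exacts [this.1, this.2.1]

variable {K : Type*} [Field K] [CharP K 2]

-- A common factor `D` satisfies `D ^ 2 ∣ leadingForm (u * v)`, hence divides the derivatives of
-- this form. It also divides the component of degree `t - 1` of `u * v`, i.e. `(x + y) ^ (t - 1)`.
lemma isRelPrime_leadingForm_of_mul_eq_apnPolynomial (ht : Odd t) (ht1 : t ≠ 1)
    {u v : MvPolynomial (Fin 2) K} (huv : u * v = apnPolynomial K t) :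
    IsRelPrime (leadingForm u) (leadingForm v) := by
  intro D hDu hDv
  have t_pos := ht.pos
  have degree_uv := totalDegree_apnPolynomial (R := K) ht ht1
  have ne_zero : u ≠ 0 ∧ v ≠ 0 := mul_ne_zero_iff.1 (huv ▸ apnPolynomial_ne_zero ht ht1)
  have leadingForm_uv : leadingForm (u * v) = X 0 ^ t + X 1 ^ t + (X 0 + X 1) ^ t := by
    rw [leadingForm, Polynomial.leadingCoeff, natDegree_homogeneousExpansion,
      coeff_homogeneousExpansion, huv, degree_uv, homogeneousComponent_self_apnPolynomial t_pos.ne']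
  have dvd_pderiv : D ∣ X 0 ^ (t - 1) + (X 0 + X 1) ^ (t - 1) := by
    rw [← pderiv_zero_pow_add_pow_add_add_pow ht, ← leadingForm_uv, leadingForm_mul]
    exact dvd_derivation_of_mul_self_dvd _ (mul_dvd_mul hDu hDv)
  have dvd_component : D ∣ (X 0 + X 1) ^ (t - 1) := by
    have := dvd_homogeneousComponent_mul_of_dvd_leadingForm hDu hDv (n := t - 1) (by
      rw [← totalDegree_mul_of_isDomain ne_zero.1 ne_zero.2, huv, degree_uv,
        Nat.sub_add_cancel t_pos])
    rwa [huv, homogeneousComponent_apnPolynomial (by omega), if_neg (by omega), zero_add,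
      Nat.choose_symm t_pos, Nat.choose_one_right, CharTwo.natCast_eq_ite,
      if_neg (Nat.not_even_iff_odd.2 ht), one_mul] at this
  have isRelPrime : IsRelPrime (X 0 : MvPolynomial (Fin 2) K) (X 0 + X 1) := fun d hd hd' =>
    isRelPrime_X_zero_X_one hd ((dvd_add_right hd).1 hd')
  exact isRelPrime.pow ((dvd_add_left dvd_component).1 dvd_pderiv) dvd_component

lemma isRelPrime_leadingForm_of_mul_dvd_apnPolynomial (ht : Odd t) (ht1 : t ≠ 1)
    {u v : MvPolynomial (Fin 2) K} (huv : u * v ∣ apnPolynomial K t) :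
    IsRelPrime (leadingForm u) (leadingForm v) := by
  obtain ⟨w, hw⟩ := huv
  have isRelPrime := isRelPrime_leadingForm_of_mul_eq_apnPolynomial ht ht1
    ((mul_assoc u v w).symm.trans hw.symm)
  rw [leadingForm_mul] at isRelPrime
  exact isRelPrime.of_mul_right_left

end ApnPolynomial

section TangentCone

variable {K : Type*} [Field K] {i l : ℕ}

lemma pow_two_pow_eq_self_of_dvd {M : Type*} [Monoid M] {c : M} (hdvd : l ∣ 2 ^ i - 1)
    (hc : c ^ l = 1) : c ^ 2 ^ i = c := by
  obtain ⟨m, hm⟩ := hdvd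
  rw [← Nat.sub_add_cancel (Nat.one_le_two_pow (n := i)), hm, pow_succ, pow_mul, hc, one_pow,
    one_mul]

lemma odd_two_pow_mul_add_one (hi : i ≠ 0) (l : ℕ) : Odd (2 ^ i * l + 1) :=
  ((even_two.pow_of_ne_zero hi).mul_right l).add_one

/-- The form `x^(q+1) / α + y^(q+1) / β + (x+y)^(q+1) / (α+β+1)` with `q = 2^i` and `P = (α, β)`.
It is the candidate for the tangent cone of `f_t`, `t = q ℓ + 1`, at a singular point `P`. -/
noncomputable def apnConeForm (i : ℕ) (P : Fin 2 → K) : MvPolynomial (Fin 2) K :=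
  C (P 0)⁻¹ * X 0 ^ (2 ^ i + 1) + C (P 1)⁻¹ * X 1 ^ (2 ^ i + 1) +
    C (P 0 + P 1 + 1)⁻¹ * (X 0 + X 1) ^ (2 ^ i + 1)

lemma isHomogeneous_apnConeForm (i : ℕ) (P : Fin 2 → K) :
    (apnConeForm i P).IsHomogeneous (2 ^ i + 1) := by
  have summand {a : MvPolynomial (Fin 2) K} (ha : a.IsHomogeneous 1) (c : K) :
      (C c * a ^ (2 ^ i + 1)).IsHomogeneous (2 ^ i + 1) := by
    simpa only [one_mul] using (ha.pow (2 ^ i + 1)).C_mul c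
  exact ((summand (isHomogeneous_X K 0) _).add (summand (isHomogeneous_X K 1) _)).add
    (summand ((isHomogeneous_X K 0).add (isHomogeneous_X K 1)) _)

variable [CharP K 2]

lemma squarefree_apnConeForm (hi : i ≠ 0) {P : Fin 2 → K} (hP₀ : P 0 ≠ 0) (hP₁ : P 1 ≠ 0)
    (hP₂ : P 0 + P 1 + 1 ≠ 0) : Squarefree (apnConeForm i P) := by
  refine squarefree_add_add_pow_char_pow_add_one 2 hi ?_
  have det_eq : (P 0)⁻¹ * (P 1)⁻¹ + (P 0)⁻¹ * (P 0 + P 1 + 1)⁻¹ + (P 1)⁻¹ * (P 0 + P 1 + 1)⁻¹ =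
      (P 0 * P 1 * (P 0 + P 1 + 1))⁻¹ := by
    field_simp
    linear_combination (P 0 + P 1) * CharTwo.two_eq_zero (R := K)
  rw [det_eq]
  positivity

lemma add_C_pow_sub_mem_pow_idealOfVars {σ : Type*} (hi : i ≠ 0) (hl : Odd l)
    (hdvd : l ∣ 2 ^ i - 1) {a : MvPolynomial σ K} (ha : a ∈ idealOfVars σ K) {c : K}
    (hc : c ^ l = 1) :
    (a + C c) ^ (2 ^ i * l + 1) - (C c + a + (a ^ 2 ^ i + C c⁻¹ * a ^ (2 ^ i + 1))) ∈
      idealOfVars σ K ^ (2 ^ i + 2) := by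
  have two_le : 2 ≤ 2 ^ i := Nat.le_self_pow hi 2
  have inv_eq : c ^ (l - 1) = c⁻¹ :=
    eq_inv_of_mul_eq_one_left (by rw [pow_sub_one_mul hl.pos.ne', hc])
  have dvd := pow_char_pow_dvd_add_pow_sub 2 (i := i) hl.pos.ne' a (c := C c)
    (by rw [← map_pow, hc, map_one]) (by rw [← map_pow, pow_two_pow_eq_self_of_dvd hdvd hc])
  rw [← map_pow, inv_eq, CharTwo.natCast_eq_ite, if_neg (Nat.not_even_iff_odd.2 hl),
    one_mul] at dvd
  exact Ideal.mem_of_dvd _ dvd (Ideal.pow_le_pow_right (by omega) (Ideal.pow_mem_pow ha _))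

lemma recenter_apnPolynomial_sub_apnConeForm_mem (hi : i ≠ 0) (hl : Odd l)
    (hdvd : l ∣ 2 ^ i - 1) {P : Fin 2 → K} (hP₀ : P 0 ^ l = 1) (hP₁ : P 1 ^ l = 1)
    (hP₂ : (P 0 + P 1 + 1) ^ l = 1) :
    recenter P (apnPolynomial K (2 ^ i * l + 1)) - apnConeForm i P ∈
      idealOfVars (Fin 2) K ^ (2 ^ i + 2) := by
  have X_mem (j : Fin 2) : (X j : MvPolynomial (Fin 2) K) ∈ idealOfVars (Fin 2) K :=
    Ideal.subset_span ⟨j, rfl⟩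
  have sum_mem := add_mem (add_mem
    (add_C_pow_sub_mem_pow_idealOfVars hi hl hdvd (X_mem 0) hP₀)
    (add_C_pow_sub_mem_pow_idealOfVars hi hl hdvd (X_mem 1) hP₁))
    (add_C_pow_sub_mem_pow_idealOfVars hi hl hdvd (add_mem (X_mem 0) (X_mem 1)) hP₂)
  convert sum_mem using 1
  have recenter_eq : recenter P (apnPolynomial K (2 ^ i * l + 1)) =
      (X 0 + C (P 0)) ^ (2 ^ i * l + 1) + (X 1 + C (P 1)) ^ (2 ^ i * l + 1) + 1 +
        (X 0 + X 1 + C (P 0 + P 1 + 1)) ^ (2 ^ i * l + 1) := by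
    simp only [apnPolynomial, map_add, map_pow, map_one, recenter_X]
    ring
  rw [recenter_eq, apnConeForm, add_pow_char_pow (X 0) (X 1)]
  simp only [map_add, map_one]
  linear_combination (1 + C (P 0) + C (P 1) + X 0 + X 1 + X 0 ^ 2 ^ i + X 1 ^ 2 ^ i) *
    CharTwo.two_eq_zero (R := MvPolynomial (Fin 2) K)

lemma squarefree_tangentCone_apnPolynomial (hi : i ≠ 0) (hl : Odd l)
    (hdvd : l ∣ 2 ^ i - 1) {P : Fin 2 → K}
    (hP : 2 ≤ orderAt (apnPolynomial K (2 ^ i * l + 1)) P) :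
    Squarefree (tangentCone (apnPolynomial K (2 ^ i * l + 1)) P) := by
  have pow_eq_one :=
    pow_sub_one_eq_one_of_two_le_orderAt_apnPolynomial (odd_two_pow_mul_add_one hi l) hP
  simp only [Nat.add_sub_cancel, ExpChar.pow_prime_pow_mul_eq_one_iff 2 i l] at pow_eq_one
  obtain ⟨hP₀, hP₁, hP₂⟩ := pow_eq_one
  have ne_zero {c : K} (hc : c ^ l = 1) : c ≠ 0 := by
    rintro rfl
    simp [hl.pos.ne'] at hc
  have squarefree := squarefree_apnConeForm hi (ne_zero hP₀) (ne_zero hP₁) (ne_zero hP₂)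
  have initialForm_eq := (minDegree_eq_and_initialForm_eq_of_sub_mem
    (recenter_apnPolynomial_sub_apnConeForm_mem hi hl hdvd hP₀ hP₁ hP₂) squarefree.ne_zero (by
      rw [minDegree_of_isHomogeneous (isHomogeneous_apnConeForm i P) squarefree.ne_zero]
      exact Nat.lt_succ_self _)).2
  rwa [tangentCone, initialForm_eq, initialForm_of_isHomogeneous (isHomogeneous_apnConeForm i P)]

lemma isRelPrime_tangentCone_of_mul_dvd_apnPolynomial (hi : i ≠ 0) (hl : Odd l)
    (hdvd : l ∣ 2 ^ i - 1) {u v : MvPolynomial (Fin 2) K}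
    (huv : u * v ∣ apnPolynomial K (2 ^ i * l + 1)) {P : Fin 2 → K}
    (hP : 2 ≤ orderAt (apnPolynomial K (2 ^ i * l + 1)) P) :
    IsRelPrime (tangentCone u P) (tangentCone v P) := by
  have squarefree := squarefree_tangentCone_apnPolynomial hi hl hdvd hP
  obtain ⟨w, hw⟩ := huv
  rw [hw, tangentCone_mul, tangentCone_mul] at squarefree
  exact IsRelPrime.of_squarefree_mul squarefree.of_mul_left

end TangentCone

section FactorsOfApnPolynomial

variable {k K : Type*} [Field k] [CharP k 2] [Field K] [Algebra k K] {i l : ℕ}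

lemma totalDegree_sq_le_sum_orderAt_sq_of_dvd_apnPolynomial [IsGalois k K] [IsAlgClosed K]
    (hi : i ≠ 0) (hl : Odd l) (hdvd : l ∣ 2 ^ i - 1) {f : MvPolynomial (Fin 2) k}
    (hf : f ∣ apnPolynomial k (2 ^ i * l + 1)) (hirr : Irreducible f)
    (hfK : ¬Irreducible (map (algebraMap k K) f)) {S : Finset (Fin 2 → K)}
    (hS : ∀ P, 2 ≤ orderAt (map (algebraMap k K) f) P → P ∈ S) :
    f.totalDegree ^ 2 ≤ ∑ P ∈ S, orderAt (map (algebraMap k K) f) P ^ 2 := by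
  have _ : CharP K 2 := charP_of_injective_algebraMap (algebraMap k K).injective 2
  have t_odd := odd_two_pow_mul_add_one hi l
  have t_ne_one : 2 ^ i * l + 1 ≠ 1 := by simp [hl.pos.ne']
  have apn_ne_zero := apnPolynomial_ne_zero (R := K) t_odd t_ne_one
  have map_f_dvd : map (algebraMap k K) f ∣ apnPolynomial K (2 ^ i * l + 1) := by
    rw [← map_apnPolynomial (algebraMap k K)]
    exact map_dvd _ hf
  refine totalDegree_sq_le_sum_orderAt_sq hirr hfK S (fun u v huv => ?_) fun u v huv P hu hv => ?_
  · exact isRelPrime_leadingForm_of_mul_dvd_apnPolynomial t_odd t_ne_one (huv ▸ map_f_dvd)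
  · have two_le : 2 ≤ orderAt (map (algebraMap k K) f) P := huv ▸
      two_le_orderAt_mul (huv ▸ ne_zero_of_dvd_ne_zero apn_ne_zero map_f_dvd) hu hv
    exact ⟨hS P two_le, isRelPrime_tangentCone_of_mul_dvd_apnPolynomial hi hl hdvd
      (huv ▸ map_f_dvd) (two_le.trans (orderAt_le_of_dvd map_f_dvd apn_ne_zero P))⟩

lemma finite_setOf_two_le_orderAt_of_dvd_apnPolynomial {t : ℕ} (ht : Odd t) (ht1 : t ≠ 1)
    {g : MvPolynomial (Fin 2) k} (hg : g ∣ apnPolynomial k t) :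
    {P : Fin 2 → K | 2 ≤ orderAt (map (algebraMap k K) g) P}.Finite := by
  have _ : CharP K 2 := charP_of_injective_algebraMap (algebraMap k K).injective 2
  refine (finite_setOf_two_le_orderAt_apnPolynomial ht ht1).subset fun P hP => ?_
  refine Set.mem_ofPred_eq ▸ hP.trans (orderAt_le_of_dvd ?_ (apnPolynomial_ne_zero ht ht1) P)
  rw [← map_apnPolynomial (algebraMap k K)]
  exact map_dvd _ hg

end FactorsOfApnPolynomial

theorem stmt_17_general {k K : Type*} [Field k] [CharP k 2] [Field K] [Algebra k K] [IsGalois k K]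
    [IsAlgClosed K] (i l t : ℕ) (hi : 1 ≤ i) (hlodd : Odd l) (ht : t = 2 ^ i * l + 1)
    (hdvd : l ∣ 2 ^ i - 1) (g : MvPolynomial (Fin 2) k)
    (hg : (X 0 + 1) * (X 1 + 1) * (X 0 + X 1) * g =
      X 0 ^ t + X 1 ^ t + 1 + (X 0 + X 1 + 1) ^ t)
    (fk : MvPolynomial (Fin 2) k) (hfk : fk ∣ g) (hfkirr : Irreducible fk)
    (hfknotabs : ¬ Irreducible (map (algebraMap k K) fk)) :
    ∃ hfin : {P : K × K | 2 ≤ multAt (map (algebraMap k K) g) P}.Finite,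
      fk.totalDegree ^ 2 ≤ ∑ P ∈ hfin.toFinset, multAt (map (algebraMap k K) fk) P ^ 2 := by
  subst ht
  have i_ne_zero : i ≠ 0 := Nat.one_le_iff_ne_zero.1 hi
  have t_odd := odd_two_pow_mul_add_one i_ne_zero l
  have t_ne_one : 2 ^ i * l + 1 ≠ 1 := by simp [hlodd.pos.ne']
  have g_dvd : g ∣ apnPolynomial k (2 ^ i * l + 1) := ⟨_, hg.symm.trans (mul_comm _ _)⟩
  have map_g_ne_zero : map (algebraMap k K) g ≠ 0 :=
    map_ne_zero_of_field _ (ne_zero_of_dvd_ne_zero (apnPolynomial_ne_zero t_odd t_ne_one) g_dvd)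
  have singular_finite := finite_setOf_two_le_orderAt_of_dvd_apnPolynomial (K := K)
    t_odd t_ne_one g_dvd
  have hfin : {P : K × K | 2 ≤ multAt (map (algebraMap k K) g) P}.Finite := by
    simpa [multAt_eq_orderAt] using
      singular_finite.preimage (finTwoArrowEquiv K).symm.injective.injOn
  refine ⟨hfin, (totalDegree_sq_le_sum_orderAt_sq_of_dvd_apnPolynomial i_ne_zero hlodd hdvd
    (hfk.trans g_dvd) hfkirr hfknotabs (S := singular_finite.toFinset) fun P hP => ?_).trans_eq ?_⟩
  · exact singular_finite.mem_toFinset.2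
      (hP.trans (orderAt_le_of_dvd (map_dvd _ hfk) map_g_ne_zero P))
  · refine (Finset.sum_equiv (finTwoArrowEquiv K).symm (fun P => ?_) fun P _ => ?_).symm
    · simp [multAt_eq_orderAt]
    · rw [multAt_eq_orderAt, finTwoArrowEquiv_symm_apply]

/-- If `t = 2^i ℓ + 1` with `ℓ ∣ 2^i - 1` and `ℓ ≠ 2^i - 1`, and `f_k` is an
`𝔽₂`-irreducible factor of `g_t` which is not absolutely irreducible, then
`deg(f_k)² ≤ Σ_{P ∈ Sing(g_t)} m_P(f_k)²`, the sum being over the singular points of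
`g_t` over the algebraic closure of `𝔽₂`. -/
theorem stmt_17 (i l t : ℕ) (hi : 1 ≤ i) (hl : 3 ≤ l) (hlodd : Odd l)
    (ht : t = 2 ^ i * l + 1) (hdvd : l ∣ 2 ^ i - 1) (hne : l ≠ 2 ^ i - 1)
    (g : MvPolynomial (Fin 2) (ZMod 2))
    (hg : (X 0 + 1) * (X 1 + 1) * (X 0 + X 1) * g =
      X 0 ^ t + X 1 ^ t + 1 + (X 0 + X 1 + 1) ^ t)
    (fk : MvPolynomial (Fin 2) (ZMod 2)) (hfk : fk ∣ g) (hfkirr : Irreducible fk)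
    (hfknotabs :
      ¬ Irreducible (MvPolynomial.map (algebraMap (ZMod 2) (AlgebraicClosure (ZMod 2))) fk))
    (hfin : {P : AlgebraicClosure (ZMod 2) × AlgebraicClosure (ZMod 2) |
      2 ≤ multAt (MvPolynomial.map (algebraMap (ZMod 2) (AlgebraicClosure (ZMod 2))) g) P}.Finite) :
    fk.totalDegree ^ 2 ≤
      ∑ P ∈ hfin.toFinset,
        (multAt (MvPolynomial.map (algebraMap (ZMod 2) (AlgebraicClosure (ZMod 2))) fk) P) ^ 2 :=
  (stmt_17_general i l t hi hlodd ht hdvd g hg fk hfk hfkirr hfknotabs).2
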